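/- arXiv:1309.5428 — 4 statements merged into one kernel-verified Lean document; each statement's English description precedes it below -/
import Mathlib

section
/- Let R = (R_n : n ∈ ℕ) be a computable sequence of subsets of ℕ that admits no computable R-cohesive set. Then for every 3-generic G ∈ 2^ℕ and every set C ⊆ ℕ with C ≤_T G, the set C is not R-cohesive. -/
open MeasureTheory

/-- Finite binary strings. -/
abbrev BinStr := List Bool

/-- `σ` is a (finite) initial segment of `X ∈ 2^ℕ`. -/
def IsInitSeg (σ : BinStr) (X : ℕ → Bool) : Prop :=
  ∀ i, i < σ.length → σ.getD i false = X i

/-- `A ⊆* B` : all but finitely many elements of `A` are in `B`. -/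
def SubsetStar (A B : Set ℕ) : Prop := (A \ B).Finite

/-- `C` is cohesive for the sequence `R`. -/
def Cohesive (R : ℕ → Set ℕ) (C : Set ℕ) : Prop :=
  C.Infinite ∧ ∀ n, SubsetStar C (R n) ∨ SubsetStar C (R n)ᶜ

/-- A set of naturals is computable if its characteristic function is computable. -/
def ComputableSet (A : Set ℕ) : Prop :=
  ∃ f : ℕ → Bool, Computable f ∧ ∀ n, n ∈ A ↔ f n = true

/-- A sequence of sets is computable if `{(n,x) : x ∈ R n}` is computable. -/
def ComputableSeq (R : ℕ → Set ℕ) : Prop :=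
  ∃ f : ℕ → ℕ → Bool, Computable₂ f ∧ ∀ n x, x ∈ R n ↔ f n x = true

/-- A use-monotone Turing functional: a partial computable map from
(strings × ℕ) to ℕ whose domain is monotone along extension of strings. -/
structure TuringFunctional where
  Φ : BinStr × ℕ →. ℕ
  partrec : Partrec Φ
  mono : ∀ ⦃σ τ : BinStr⦄, σ <+: τ → ∀ x, (Φ (σ, x)).Dom → (Φ (τ, x)).Dom

/-- `dom Φ(σ)` for a finite string `σ`. -/
def TuringFunctional.domStr (F : TuringFunctional) (σ : BinStr) : Set ℕ :=
  {x | (F.Φ (σ, x)).Dom}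

/-- `dom Φ(X)` for `X ∈ 2^ℕ`: the union of `dom Φ(σ)` over initial segments `σ` of `X`. -/
def TuringFunctional.domF (F : TuringFunctional) (X : ℕ → Bool) : Set ℕ :=
  {x | ∃ σ, IsInitSeg σ X ∧ (F.Φ (σ, x)).Dom}

/-- `C ≤_T X` via a monotone partial computable functional with Boolean values. -/
def ReducibleToFun (C : Set ℕ) (X : ℕ → Bool) : Prop :=
  ∃ Ψ : BinStr × ℕ →. Bool,
    Partrec Ψ ∧
    (∀ ⦃σ τ : BinStr⦄, σ <+: τ → ∀ x b, b ∈ Ψ (σ, x) → b ∈ Ψ (τ, x)) ∧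
    (∀ x, ∃ σ, IsInitSeg σ X ∧ (Ψ (σ, x)).Dom) ∧
    (∀ σ x b, IsInitSeg σ X → b ∈ Ψ (σ, x) → (b = true ↔ x ∈ C))

/-- `S` is a `Σ⁰₃` set of binary strings. -/
def Sigma3 (S : Set BinStr) : Prop :=
  ∃ P : BinStr → ℕ → ℕ → ℕ → Bool,
    (Computable fun q : BinStr × ℕ × ℕ × ℕ => P q.1 q.2.1 q.2.2.1 q.2.2.2) ∧
    ∀ σ, σ ∈ S ↔ ∃ a, ∀ b, ∃ c, P σ a b c = true

/-- `G ∈ 2^ℕ` is `3`-generic: it meets or strongly avoids every `Σ⁰₃` set of strings. -/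
def ThreeGeneric (G : ℕ → Bool) : Prop :=
  ∀ S : Set BinStr, Sigma3 S →
    (∃ σ, IsInitSeg σ G ∧ σ ∈ S) ∨ (∃ σ, IsInitSeg σ G ∧ ∀ τ, σ <+: τ → τ ∉ S)

/-- Binary trees: sets of strings closed under initial segments. -/
def IsTree (T : Set BinStr) : Prop := ∀ σ ∈ T, ∀ τ, τ <+: σ → τ ∈ T

/-- `[T]`, the set of infinite paths through `T`. -/
def paths (T : Set BinStr) : Set (ℕ → Bool) := {X | ∀ σ, IsInitSeg σ X → σ ∈ T}

/-- A computable set of binary strings. -/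
def ComputableStrSet (T : Set BinStr) : Prop :=
  ∃ f : BinStr → Bool, Computable f ∧ ∀ σ, σ ∈ T ↔ f σ = true

/-- The fair-coin (uniform) product measure on Cantor space `ℕ → Bool`, realized as
the pushforward of Lebesgue measure on `[0,1)` under the binary-digit map. -/
noncomputable def fairCoin : Measure (ℕ → Bool) :=
  Measure.map (fun x : ℝ => fun n : ℕ => decide (⌊x * 2 ^ (n + 1)⌋ % 2 = 1))
    (volume.restrict (Set.Ico (0 : ℝ) 1))

/-- The basic clopen set `[σ]` of all `X ∈ 2^ℕ` extending `σ`. -/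
def cyl (σ : BinStr) : Set (ℕ → Bool) := {X | IsInitSeg σ X}

/-- A computably enumerable set of pairs `(n, σ)`. -/
def CEStrSet (W : Set (ℕ × BinStr)) : Prop :=
  ∃ f : ℕ × BinStr →. Unit, Partrec f ∧ ∀ p, p ∈ W ↔ (f p).Dom

/-- `X` is Martin-Löf random: it passes every Martin-Löf test. -/
def MLRandom (X : ℕ → Bool) : Prop :=
  ∀ W : Set (ℕ × BinStr), CEStrSet W →
    (∀ n : ℕ, fairCoin (⋃ σ ∈ {σ | (n, σ) ∈ W}, cyl σ) ≤ 1 / 2 ^ n) →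
    X ∉ ⋂ n : ℕ, ⋃ σ ∈ {σ | (n, σ) ∈ W}, cyl σ

/-- A uniformly computable enumeration of binary trees containing every computable
binary tree. -/
def TreeEnum (T : ℕ → Set BinStr) : Prop :=
  (∃ f : ℕ → BinStr → Bool, Computable₂ f ∧ ∀ e σ, σ ∈ T e ↔ f e σ = true) ∧
  (∀ e, IsTree (T e)) ∧
  (∀ S, IsTree S → ComputableStrSet S → ∃ e, T e = S)

/-- The set `D_{e,0}` of strings forcing `dom Φ(G)` to be bounded. -/
def D0 (F : TuringFunctional) : Set BinStr :=
  {τ | ∃ x : ℕ, ∀ ρ, τ <+: ρ → (F.domStr ρ).encard < (x : ℕ∞)}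

/-- The set `D_{e,1,n}` of strings forcing `dom Φ(G)` to be split by `R n`. -/
def D1 (R : ℕ → Set ℕ) (F : TuringFunctional) (n : ℕ) : Set BinStr :=
  {τ | ∀ ρ, τ <+: ρ → ∀ x : ℕ, ∃ ζ, ρ <+: ζ ∧ ∃ u v, x < u ∧ x < v ∧
    u ∈ F.domStr ζ ∧ v ∈ F.domStr ζ ∧ (u ∈ R n ↔ v ∉ R n)}


section Helpers
variable {α : Type} [Primcodable α]

/-- bounded existential search -/
def bex (p : ℕ → Bool) (n : ℕ) : Bool := Nat.rec (motive := fun _ => Bool) false (fun m ih => ih || p m) n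

theorem bex_iff (p : ℕ → Bool) (n : ℕ) : bex p n = true ↔ ∃ m, m < n ∧ p m = true := by
  induction n with
  | zero => simp [bex]
  | succ n ih =>
    have : bex p (n+1) = (bex p n || p n) := rfl
    rw [this, Bool.or_eq_true, ih]
    constructor
    · rintro (⟨m, h, h'⟩ | h)
      · exact ⟨m, by omega, h'⟩
      · exact ⟨n, by omega, h⟩
    · rintro ⟨m, h, h'⟩
      rcases Nat.lt_succ_iff_lt_or_eq.1 h with h | rfl
      · exact Or.inl ⟨m, h, h'⟩
      · exact Or.inr h'

theorem comp_bex {p : α → ℕ → Bool} (hp : Computable₂ p) {b : α → ℕ} (hb : Computable b) :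
    Computable fun a => bex (p a) (b a) := by
  refine Computable.nat_rec (h := fun a y => y.2 || p a y.1) hb (Computable.const false) ?_
  exact Primrec.or.to_comp.comp (Computable.snd.comp Computable.snd)
    (hp.comp Computable.fst (Computable.fst.comp Computable.snd))

/-- total decoding -/
def dec (β : Type) [Primcodable β] [Inhabited β] (k : ℕ) : β := ((Encodable.decode k : Option β)).getD default

theorem dec_encode {β : Type} [Primcodable β] [Inhabited β] (b : β) : dec β (Encodable.encode b) = b := by
  simp [dec]

theorem comp_dec {β : Type} [Primcodable β] [Inhabited β] : Computable (dec β) :=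
  Computable.option_getD Computable.decode (Computable.const default)

theorem comp_find {p : α → ℕ → Bool} (hp : Computable₂ p) (h : ∀ a, ∃ n, p a n = true) :
    Computable fun a => Nat.find (h a) := by
  refine Partrec.of_eq_tot (Partrec.rfind (p := fun a n => Part.some (p a n)) hp.partrec₂) ?_
  intro a
  refine Nat.mem_rfind.2 ⟨Part.mem_some_iff.2 (Nat.find_spec (h a)).symm, ?_⟩
  intro m hm
  have := Nat.find_min (h a) hm
  exact Part.mem_some_iff.2 (Bool.not_eq_true _ ▸ this).symm

abbrev Trip := ℕ × BinStr × ℕ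
abbrev Cand := BinStr × ℕ × Bool

/-- `k` refutes that `q` decides the colour -/
def BadAt (A : Trip → Bool) (f : ℕ → ℕ → Bool) (q : ℕ × Cand) (k : ℕ) : Bool :=
  A ((dec Trip k).1, q.2.1 ++ (dec Trip k).2.1, (dec Trip k).2.2) &&
    (decide (q.2.2.1 < (dec Trip k).2.2) && !(f q.1 (dec Trip k).2.2 == q.2.2.2))

open Computable in
theorem comp_BadAt {A : Trip → Bool} (hA : Computable A) {f : ℕ → ℕ → Bool} (hf : Computable₂ f) :
    Computable₂ (BadAt A f) := by
  have d : Computable fun p : (ℕ × Cand) × ℕ => dec Trip p.2 := comp_dec.comp snd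
  have q : Computable fun p : (ℕ × Cand) × ℕ => p.1.2 := snd.comp fst
  have du := snd.comp (snd.comp d)
  refine Primrec.and.to_comp.comp (hA.comp ?_) (Primrec.and.to_comp.comp ?_ (Primrec.not.to_comp.comp ?_))
  · exact (fst.comp d).pair ((list_append.comp (fst.comp q) (fst.comp (snd.comp d))).pair du)
  · exact Primrec.nat_lt.decide.to_comp.comp (fst.comp (snd.comp q)) du
  · exact Primrec.beq.to_comp.comp (hf.comp (fst.comp fst) du) (snd.comp (snd.comp q))

theorem BadAt_encode (A : Trip → Bool) (f : ℕ → ℕ → Bool) (n ρ x b t δ u) :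
    BadAt A f (n, ρ, x, b) (Encodable.encode ((t, δ, u) : Trip)) = true ↔
      A (t, ρ ++ δ, u) = true ∧ x < u ∧ f n u ≠ b := by
  unfold BadAt
  rw [dec_encode]
  simp

theorem BadAt_elim {A : Trip → Bool} {f : ℕ → ℕ → Bool} {n ρ x b k}
    (h : BadAt A f (n, ρ, x, b) k = true) : ∃ t δ u,
      A (t, ρ ++ δ, u) = true ∧ x < u ∧ f n u ≠ b :=
  ⟨(dec Trip k).1, (dec Trip k).2.1, (dec Trip k).2.2, by simpa [BadAt] using h⟩

/-- test whether candidate `j` is acceptable for `(n, s, ρ)` -/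
def okAt (A : Trip → Bool) (f : ℕ → ℕ → Bool) (q : (ℕ × ℕ) × BinStr) (j : ℕ) : Bool :=
  !(bex (BadAt A f (q.1.1, q.2 ++ (dec Cand j).1, (dec Cand j).2)) q.1.2) || decide (q.1.2 < j)

open Computable in
theorem comp_okAt {A : Trip → Bool} (hA : Computable A) {f : ℕ → ℕ → Bool} (hf : Computable₂ f) :
    Computable₂ (okAt A f) := by
  have d : Computable fun p : ((ℕ × ℕ) × BinStr) × ℕ => dec Cand p.2 := comp_dec.comp snd
  have s : Computable fun p : ((ℕ × ℕ) × BinStr) × ℕ => p.1.1.2 := snd.comp (fst.comp fst)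
  refine Primrec.or.to_comp.comp (Primrec.not.to_comp.comp ?_) (Primrec.nat_lt.decide.to_comp.comp s snd)
  refine comp_bex (p := fun p : ((ℕ × ℕ) × BinStr) × ℕ =>
    BadAt A f (p.1.1.1, p.1.2 ++ (dec Cand p.2).1, (dec Cand p.2).2)) ?_ s
  have : Computable fun p : ((ℕ × ℕ) × BinStr) × ℕ =>
    ((p.1.1.1, p.1.2 ++ (dec Cand p.2).1, (dec Cand p.2).2) : ℕ × Cand) :=
    (fst.comp (fst.comp fst)).pair
      ((list_append.comp (snd.comp fst) (fst.comp d)).pair (snd.comp d))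
  exact (comp_BadAt hA hf).comp (this.comp fst) snd

theorem okAt_ex (A : Trip → Bool) (f : ℕ → ℕ → Bool) (q : (ℕ × ℕ) × BinStr) :
    ∃ j, okAt A f q j = true := ⟨q.1.2 + 1, by simp [okAt]⟩

def nextStr (A : Trip → Bool) (f : ℕ → ℕ → Bool) (q : (ℕ × ℕ) × BinStr) : BinStr :=
  q.2 ++ (dec Cand (Nat.find (okAt_ex A f q))).1

open Computable in
theorem comp_nextStr {A : Trip → Bool} (hA : Computable A) {f : ℕ → ℕ → Bool} (hf : Computable₂ f) :
    Computable (nextStr A f) := by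
  have h := comp_find (comp_okAt hA hf) (okAt_ex A f)
  have h2 := (comp_dec (β := Cand)).comp h
  have h3 := fst.comp h2
  have h4 := list_append.comp (snd (α := ℕ × ℕ) (β := BinStr)) h3
  exact h4

/-- stage `s` approximation of the `n`-th string -/
def rho (A : Trip → Bool) (f : ℕ → ℕ → Bool) (σ : BinStr) (p : ℕ × ℕ) : BinStr :=
  Nat.rec (motive := fun _ => BinStr) σ (fun n ih => nextStr A f ((n, p.1), ih)) p.2

open Computable in
theorem comp_rho {A : Trip → Bool} (hA : Computable A) {f : ℕ → ℕ → Bool} (hf : Computable₂ f)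
    (σ : BinStr) : Computable (rho A f σ) := by
  have e : Computable fun z : (ℕ × ℕ) × (ℕ × BinStr) => (((z.2.1, z.1.1), z.2.2) : (ℕ × ℕ) × BinStr) :=
    ((fst.comp snd).pair (fst.comp fst)).pair (snd.comp snd)
  have e2 : Computable₂ fun (p : ℕ × ℕ) (y : ℕ × BinStr) => nextStr A f ((y.1, p.1), y.2) :=
    (comp_nextStr hA hf).comp e
  have e3 := Computable.nat_rec (snd (α := ℕ) (β := ℕ)) (const σ) e2
  exact e3

theorem rho_succ (A : Trip → Bool) (f : ℕ → ℕ → Bool) (σ : BinStr) (s n : ℕ) :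
    rho A f σ (s, n+1) = nextStr A f ((n, s), rho A f σ (s, n)) := rfl

theorem rho_mono (A : Trip → Bool) (f : ℕ → ℕ → Bool) (σ : BinStr) (s n m : ℕ) (h : n ≤ m) :
    ∃ δ, rho A f σ (s, m) = rho A f σ (s, n) ++ δ := by
  induction m, h using Nat.le_induction with
  | base => exact ⟨[], by simp⟩
  | succ m _ ih =>
    obtain ⟨δ, h⟩ := ih
    rw [rho_succ, nextStr]
    simp only [h, List.append_assoc]
    exact ⟨_, rfl⟩

theorem okAt_iff (A : Trip → Bool) (f : ℕ → ℕ → Bool) (n s ρ j) (hj : j ≤ s) :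
    okAt A f ((n, s), ρ) j = true ↔
      ∀ k < s, BadAt A f (n, ρ ++ (dec Cand j).1, (dec Cand j).2) k = false := by
  have h1 : decide (s < j) = false := by simpa using hj
  have h2 := bex_iff (BadAt A f (n, ρ ++ (dec Cand j).1, (dec Cand j).2)) s
  simp only [okAt, h1, Bool.or_false, Bool.not_eq_true']
  rw [← Bool.not_eq_true, h2]
  simp

theorem next_lim (A : Trip → Bool) (f : ℕ → ℕ → Bool) (n ρ)
    (h : ∃ δ x b, ∀ t δ' u, A (t, ρ ++ δ ++ δ', u) = true → x < u → f n u = b) :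
    ∃ δ x b s₀, (∀ t δ' u, A (t, ρ ++ δ ++ δ', u) = true → x < u → f n u = b) ∧
      ∀ s, s₀ ≤ s → nextStr A f ((n, s), ρ) = ρ ++ δ := by
  have key : ∃ j, ∀ k, BadAt A f (n, ρ ++ (dec Cand j).1, (dec Cand j).2) k = false := by
    obtain ⟨δ, x, b, h⟩ := h
    refine ⟨Encodable.encode ((δ, x, b) : Cand), fun k => ?_⟩
    rw [dec_encode, ← Bool.not_eq_true]
    intro hk
    obtain ⟨t, δ', u, h1, h2, h3⟩ := BadAt_elim hk
    exact h3 (h _ _ _ h1 h2)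
  classical
  have hmin : ∀ i, i < Nat.find key → ∃ k, BadAt A f (n, ρ ++ (dec Cand i).1, (dec Cand i).2) k = true := by
    intro i hi
    have := Nat.find_min key hi
    push Not at this
    simpa using this
  choose! K hK using hmin
  obtain ⟨j, hj⟩ : ∃ j, j = Nat.find key := ⟨_, rfl⟩
  have hjs := Nat.find_spec key
  rw [← hj] at hK hjs
  refine ⟨(dec Cand j).1, (dec Cand j).2.1, (dec Cand j).2.2,
    j + (Finset.range j).sup K + 1, ?_, ?_⟩
  · intro t δ' u h1 h2
    by_contra h3
    have := (BadAt_encode A f n (ρ ++ (dec Cand j).1) (dec Cand j).2.1 (dec Cand j).2.2 t δ' u).2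
      ⟨h1, h2, h3⟩
    rw [hjs] at this
    exact absurd this (by simp)
  · intro s hs
    have : Nat.find (okAt_ex A f ((n, s), ρ)) = j := by
      rw [Nat.find_eq_iff]
      constructor
      · rw [okAt_iff _ _ _ _ _ _ (by omega)]
        exact fun k _ => hjs k
      · intro i hi
        rw [okAt_iff _ _ _ _ _ _ (by omega)]
        intro hh
        have h1 : K i ≤ (Finset.range j).sup K := Finset.le_sup (by simpa using hi)
        have := hh (K i) (by omega)
        rw [hK i hi] at this
        exact absurd this (by simp)
    simp [nextStr, this]

theorem rho_lim (A : Trip → Bool) (f : ℕ → ℕ → Bool) (σ)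
    (h : ∀ n δ, ∃ δ' x b, ∀ t δ'' u, A (t, σ ++ δ ++ δ' ++ δ'', u) = true → x < u → f n u = b)
    (n : ℕ) : ∃ δ s₀, ∀ s, s₀ ≤ s → rho A f σ (s, n) = σ ++ δ := by
  induction n with
  | zero => exact ⟨[], 0, fun s _ => by simp [rho]⟩
  | succ n ih =>
    obtain ⟨δ, s₀, h0⟩ := ih
    obtain ⟨δ', x, b, s₁, -, h1⟩ := next_lim A f n (σ ++ δ) (h n δ)
    refine ⟨δ ++ δ', max s₀ s₁, fun s hs => ?_⟩
    rw [rho_succ, h0 s (le_trans (le_max_left _ _) hs), h1 s (le_trans (le_max_right _ _) hs),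
      List.append_assoc]

/-- search test for the next element -/
def hitAt (A : Trip → Bool) (f : ℕ → ℕ → Bool) (σ : BinStr) (q : ℕ × ℕ) (k : ℕ) : Bool :=
  decide (q.2 < (dec (ℕ × Trip) k).2.2.2) &&
  A ((dec (ℕ × Trip) k).2.1,
    rho A f σ (q.1 + (dec (ℕ × Trip) k).1, q.1) ++ (dec (ℕ × Trip) k).2.2.1,
    (dec (ℕ × Trip) k).2.2.2)

open Computable in
theorem comp_hitAt {A : Trip → Bool} (hA : Computable A) {f : ℕ → ℕ → Bool} (hf : Computable₂ f)
    (σ : BinStr) : Computable₂ (hitAt A f σ) := by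
  have d : Computable fun p : (ℕ × ℕ) × ℕ => dec (ℕ × Trip) p.2 := comp_dec.comp snd
  have q1 : Computable fun p : (ℕ × ℕ) × ℕ => p.1.1 := fst.comp fst
  have u := snd.comp (snd.comp (snd.comp d))
  refine Primrec.and.to_comp.comp
    (Primrec.nat_lt.decide.to_comp.comp (snd.comp fst) u) (hA.comp ?_)
  refine (fst.comp (snd.comp d)).pair ((list_append.comp ((comp_rho hA hf σ).comp ?_) ?_).pair u)
  · exact (Primrec.nat_add.to_comp.comp q1 (fst.comp d)).pair q1
  · exact fst.comp (snd.comp (snd.comp d))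

theorem core {A : Trip → Bool} (hA : Computable A) {f : ℕ → ℕ → Bool} (hf : Computable₂ f)
    (σ : BinStr)
    (h1 : ∀ δ x, ∃ t δ' u, A (t, σ ++ δ ++ δ', u) = true ∧ x < u)
    (h2 : ∀ n δ, ∃ δ' x b, ∀ t δ'' u, A (t, σ ++ δ ++ δ' ++ δ'', u) = true → x < u → f n u = b) :
    ∃ u : ℕ → ℕ, Computable u ∧ StrictMono u ∧ ∀ n, ∃ b M, ∀ s, M ≤ s → f n (u s) = b := by
  have hex : ∀ q : ℕ × ℕ, ∃ k, hitAt A f σ q k = true := by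
    intro q
    obtain ⟨δ, s₀, h⟩ := rho_lim A f σ h2 q.1
    obtain ⟨t, δ', u, ha, hu⟩ := h1 δ q.2
    refine ⟨Encodable.encode ((s₀, t, δ', u) : ℕ × Trip), ?_⟩
    unfold hitAt
    rw [dec_encode]
    dsimp only
    rw [h (q.1 + s₀) (by omega), ha, decide_eq_true hu]
    rfl
  obtain ⟨F, hF, hFs⟩ : ∃ F : ℕ × ℕ → ℕ, Computable F ∧ ∀ q : ℕ × ℕ, q.2 < F q ∧
      ∃ e t δ, A (t, rho A f σ (q.1 + e, q.1) ++ δ, F q) = true := by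
    have e1 := (comp_dec (β := ℕ × Trip)).comp (comp_find (comp_hitAt hA hf σ) hex)
    refine ⟨_, Computable.snd.comp (Computable.snd.comp (Computable.snd.comp e1)), ?_⟩
    intro q
    have := Nat.find_spec (hex q)
    unfold hitAt at this
    rw [Bool.and_eq_true, decide_eq_true_eq] at this
    exact ⟨this.1, _, _, _, this.2⟩
  let u : ℕ → ℕ := fun n => Nat.rec (motive := fun _ => ℕ) 0 (fun s ih => F (s, ih)) n
  have hu : Computable u := by
    have e2 : Computable₂ fun (_ : ℕ) (y : ℕ × ℕ) => F y := hF.comp Computable.snd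
    have e3 := Computable.nat_rec (Computable.id (α := ℕ)) (Computable.const 0) e2
    exact e3
  have us : ∀ s, u (s+1) = F (s, u s) := fun s => rfl
  have hm : StrictMono u := strictMono_nat_of_lt_succ fun s => by
    rw [us]; exact (hFs (s, u s)).1
  refine ⟨u, hu, hm, fun n => ?_⟩
  obtain ⟨δ, s₀, h⟩ := rho_lim A f σ h2 n
  obtain ⟨δ', x, b, s₁, hb, h'⟩ := next_lim A f n (σ ++ δ) (h2 n δ)
  refine ⟨b, s₀ + s₁ + n + x + 5, fun s hs => ?_⟩
  obtain ⟨s, rfl⟩ : ∃ r, s = r + 1 := ⟨s - 1, by omega⟩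
  obtain ⟨-, e, t, η, ha⟩ := hFs (s, u s)
  have hx : s + 1 ≤ u (s+1) := hm.le_apply
  rw [← us] at ha
  dsimp only at ha
  obtain ⟨θ, hθ⟩ := rho_mono A f σ (s + e) (n+1) s (by omega)
  rw [hθ, rho_succ, h _ (by omega), h' _ (by omega), List.append_assoc _ θ η] at ha
  exact hb _ _ _ ha (by omega)

end Helpers

theorem comp_range {u : ℕ → ℕ} (hu : Computable u) (hm : StrictMono u) :
    ComputableSet (Set.range u) := by
  refine ⟨fun x => bex (fun s => u s == x) (x + 1), ?_, ?_⟩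
  · refine comp_bex (p := fun x s => u s == x) ?_ Computable.succ
    exact Primrec.beq.to_comp.comp (hu.comp Computable.snd) Computable.fst
  · intro n
    rw [bex_iff]
    constructor
    · rintro ⟨s, rfl⟩
      exact ⟨s, Nat.lt_succ_of_le hm.le_apply, by simp⟩
    · rintro ⟨s, -, h⟩
      exact ⟨s, by simpa using h⟩

theorem cohesive_of {R : ℕ → Set ℕ} {f : ℕ → ℕ → Bool} (hfR : ∀ n x, x ∈ R n ↔ f n x = true)
    {u : ℕ → ℕ} (hm : StrictMono u) (h : ∀ n, ∃ b M, ∀ s, M ≤ s → f n (u s) = b) :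
    Cohesive R (Set.range u) := by
  refine ⟨Set.infinite_range_of_injective hm.injective, fun n => ?_⟩
  obtain ⟨b, M, hb⟩ := h n
  have fin : (u '' Set.Iio M).Finite := (Set.finite_Iio M).image u
  cases b with
  | true =>
    left
    refine fin.subset ?_
    rintro _ ⟨⟨s, rfl⟩, h2⟩
    refine ⟨s, ?_, rfl⟩
    by_contra hc
    exact h2 ((hfR _ _).2 (hb s (by simpa using hc)))
  | false =>
    right
    refine fin.subset ?_
    rintro _ ⟨⟨s, rfl⟩, h2⟩
    refine ⟨s, ?_, rfl⟩
    by_contra hc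
    have h3 := hb s (by simpa using hc)
    have h4 := (hfR _ _).1 (not_not.1 h2)
    rw [h3] at h4
    exact absurd h4 (by simp)

theorem exists_A {Ψ : BinStr × ℕ →. Bool} (hΨ : Partrec Ψ) :
    ∃ A : Trip → Bool, Computable A ∧ ∀ ζ u, true ∈ Ψ (ζ, u) ↔ ∃ t, A (t, ζ, u) = true := by
  obtain ⟨c, hc⟩ := Nat.Partrec.Code.exists_code.1 hΨ
  refine ⟨fun p => decide (Nat.Partrec.Code.evaln p.1 c (Encodable.encode p.2) = some (Encodable.encode true)),
    ?_, ?_⟩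
  · refine Primrec.to_comp (Primrec.eq.decide.comp ?_ (Primrec.const _))
    exact Nat.Partrec.Code.primrec_evaln.comp
      ((Primrec.fst.pair (Primrec.const c)).pair (Primrec.encode.comp Primrec.snd))
  · intro ζ u
    have := @Nat.Partrec.Code.evaln_complete c (Encodable.encode (ζ, u)) (Encodable.encode true)
    rw [hc] at this
    simp only [decide_eq_true_eq]
    simp only [Option.mem_def] at this
    rw [← this]
    rw [Encodable.encodek]
    simp

theorem initSeg_comparable {σ τ : BinStr} {X : ℕ → Bool} (h1 : IsInitSeg σ X) (h2 : IsInitSeg τ X)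
    (h : σ.length ≤ τ.length) : σ <+: τ := by
  rw [List.prefix_iff_getElem]
  refine ⟨h, fun i hi => ?_⟩
  have a := h1 i hi
  have b := h2 i (lt_of_lt_of_le hi h)
  rw [List.getD_eq_getElem _ _ hi] at a
  rw [List.getD_eq_getElem _ _ (lt_of_lt_of_le hi h)] at b
  rw [a, b]

theorem initSeg_join {σ τ : BinStr} {X : ℕ → Bool} (h1 : IsInitSeg σ X) (h2 : IsInitSeg τ X) :
    ∃ ρ, IsInitSeg ρ X ∧ σ <+: ρ ∧ τ <+: ρ := by
  rcases le_total σ.length τ.length with h | h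
  · exact ⟨τ, h2, initSeg_comparable h1 h2 h, List.prefix_refl _⟩
  · exact ⟨σ, h1, List.prefix_refl _, initSeg_comparable h2 h1 h⟩

/-- **Theorem (Wang, Theorem 2.1 restated via reductions).** If `R` is a computable
sequence of subsets of `ℕ` admitting no computable `R`-cohesive set, then no set
computable from a `3`-generic is `R`-cohesive. -/
theorem no_three_generic_computes_cohesive
    (R : ℕ → Set ℕ) (hR : ComputableSeq R)
    (hno : ¬ ∃ C : Set ℕ, ComputableSet C ∧ Cohesive R C) :
    ∀ G : ℕ → Bool, ThreeGeneric G →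
      ∀ C : Set ℕ, ReducibleToFun C G → ¬ Cohesive R C := by
  rintro G hG C ⟨Ψ, hΨ, mono, tot, corr⟩ ⟨hinf, hcoh⟩
  obtain ⟨f, hf, hfR⟩ := hR
  obtain ⟨A, hA, hAΨ⟩ := exists_A hΨ
  have hB := comp_BadAt hA hf
  -- infinitude is forced
  have H1 : ∃ σ, IsInitSeg σ G ∧ ∀ τ, σ <+: τ → ∀ x, ∃ t δ u, A (t, τ ++ δ, u) = true ∧ x < u := by
    have hS : Sigma3 {τ | ∃ x, ∀ k, A ((dec Trip k).1, τ ++ (dec Trip k).2.1, (dec Trip k).2.2) = true →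
        ¬ x < (dec Trip k).2.2} := by
      refine ⟨fun τ x k _ => !(A ((dec Trip k).1, τ ++ (dec Trip k).2.1, (dec Trip k).2.2) &&
        decide (x < (dec Trip k).2.2)), ?_, ?_⟩
      · open Computable in
        have k : Computable fun q : BinStr × ℕ × ℕ × ℕ => dec Trip q.2.2.1 :=
          comp_dec.comp (fst.comp (snd.comp snd))
        open Computable in
        exact Primrec.not.to_comp.comp (Primrec.and.to_comp.comp
          (hA.comp ((fst.comp k).pair ((list_append.comp fst (fst.comp (snd.comp k))).pair
            (snd.comp (snd.comp k)))))
          (Primrec.nat_lt.decide.to_comp.comp (fst.comp snd) (snd.comp (snd.comp k))))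
      · intro σ
        simp [imp_iff_not_or]
    rcases hG _ hS with ⟨σ, hσ, x, hx⟩ | ⟨σ, hσ, h⟩
    · exfalso
      obtain ⟨u, hu, hxu⟩ := hinf.exists_gt x
      obtain ⟨τ, hτ, hd⟩ := tot u
      obtain ⟨b, hb⟩ := Part.dom_iff_mem.1 hd
      have hbt := (corr τ u b hτ hb).2 hu
      subst hbt
      obtain ⟨ρ, hρ, ⟨δ, rfl⟩, h2⟩ := initSeg_join hσ hτ
      obtain ⟨t, ht⟩ := (hAΨ _ _).1 (mono h2 _ _ hb)
      have := hx (Encodable.encode ((t, δ, u) : Trip))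
      rw [dec_encode] at this
      exact this ht hxu
    · refine ⟨σ, hσ, fun τ hτ x => ?_⟩
      have := h τ hτ
      simp only [Set.mem_ofPred_eq, not_exists, not_forall, not_not] at this
      obtain ⟨k, h1, h2⟩ := this x
      exact ⟨_, _, _, h1, h2⟩
  have H2 : ∃ σ, IsInitSeg σ G ∧ ∀ τ, σ <+: τ → ∀ n, ∃ δ x b, ∀ t δ' u,
      A (t, τ ++ δ ++ δ', u) = true → x < u → f n u = b := by
    have hS : Sigma3 {τ | ∃ n, ∀ j, ∃ k, BadAt A f (n, τ ++ (dec Cand j).1, (dec Cand j).2) k = true} := by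
      refine ⟨fun τ n j k => BadAt A f (n, τ ++ (dec Cand j).1, (dec Cand j).2) k, ?_, fun σ => Iff.rfl⟩
      open Computable in
      have j : Computable fun q : BinStr × ℕ × ℕ × ℕ => dec Cand q.2.2.1 :=
        comp_dec.comp (fst.comp (snd.comp snd))
      open Computable in
      exact hB.comp ((fst.comp snd).pair ((list_append.comp fst (fst.comp j)).pair (snd.comp j)))
        (snd.comp (snd.comp snd))
    rcases hG _ hS
      with ⟨σ, hσ, n, hn⟩ | ⟨σ, hσ, h⟩
    · exfalso
      have hbig : ∀ x b, ∃ u ∈ C, x < u ∧ f n u ≠ b := by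
        intro x b
        have hS : Sigma3 {τ | ∃ k, A ((dec (ℕ × ℕ) k).1, τ, (dec (ℕ × ℕ) k).2) = true ∧
            x < (dec (ℕ × ℕ) k).2 ∧ f n (dec (ℕ × ℕ) k).2 ≠ b} := by
          refine ⟨fun τ k _ _ => A ((dec (ℕ × ℕ) k).1, τ, (dec (ℕ × ℕ) k).2) &&
            (decide (x < (dec (ℕ × ℕ) k).2) && !(f n (dec (ℕ × ℕ) k).2 == b)), ?_, ?_⟩
          · open Computable in
            have k : Computable fun q : BinStr × ℕ × ℕ × ℕ => dec (ℕ × ℕ) q.2.1 :=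
              comp_dec.comp (fst.comp snd)
            open Computable in
            exact Primrec.and.to_comp.comp (hA.comp ((fst.comp k).pair (fst.pair (snd.comp k))))
              (Primrec.and.to_comp.comp
                (Primrec.nat_lt.decide.to_comp.comp (const x) (snd.comp k))
                (Primrec.not.to_comp.comp
                  (Primrec.beq.to_comp.comp (hf.comp (const n) (snd.comp k)) (const b))))
          · intro σ
            simp
        rcases hG _ hS with ⟨ζ, hζ, k, h1, h2, h3⟩ | ⟨ρ, hρ, h⟩
        · exact ⟨_, (corr _ _ _ hζ ((hAΨ _ _).2 ⟨_, h1⟩)).1 rfl, h2, h3⟩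
        · exfalso
          obtain ⟨τ, -, ⟨δ, rfl⟩, h2⟩ := initSeg_join hσ hρ
          obtain ⟨k, hk⟩ := hn (Encodable.encode ((δ, x, b) : Cand))
          rw [dec_encode] at hk
          obtain ⟨t, δ', u, a1, a2, a3⟩ := BadAt_elim hk
          refine h _ (h2.trans (List.prefix_append _ δ')) ⟨Encodable.encode ((t, u) : ℕ × ℕ), ?_⟩
          rw [dec_encode]
          exact ⟨a1, a2, a3⟩
      rcases hcoh n with h | h
      · obtain ⟨M, hM⟩ := h.bddAbove
        obtain ⟨u, hu, hx, hb⟩ := hbig M true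
        exact absurd (hM ⟨hu, fun hc => hb ((hfR _ _).1 hc)⟩) (by omega)
      · obtain ⟨M, hM⟩ := h.bddAbove
        obtain ⟨u, hu, hx, hb⟩ := hbig M false
        refine absurd (hM ⟨hu, fun hc => hc ((hfR _ _).2 (by simpa using hb))⟩) (by omega)
    · refine ⟨σ, hσ, fun τ hτ n => ?_⟩
      have := h τ hτ
      simp only [Set.mem_ofPred_eq, not_exists, not_forall] at this
      obtain ⟨j, hj⟩ := this n
      refine ⟨(dec Cand j).1, (dec Cand j).2.1, (dec Cand j).2.2, fun t δ' u h1 h2 => ?_⟩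
      by_contra h3
      exact hj _ ((BadAt_encode A f n _ _ _ t δ' u).2 ⟨h1, h2, h3⟩)
  obtain ⟨σ₁, i1, H1⟩ := H1
  obtain ⟨σ₂, i2, H2⟩ := H2
  obtain ⟨σ, -, p1, p2⟩ := initSeg_join i1 i2
  obtain ⟨u, hu, hm, h⟩ := core hA hf σ
    (fun δ x => H1 _ (p1.trans (List.prefix_append _ _)) x)
    (fun n δ => H2 _ (p2.trans (List.prefix_append _ _)) n)
  exact hno ⟨_, comp_range hu hm, cohesive_of hfR hm h⟩
end

section
/- Let R = (R_n : n ∈ ℕ) be a computable sequence of subsets of ℕ that admits no computable R-cohesive set. Then for every 3-generic G ∈ 2^ℕ and every use-monotone Turing functional Φ, the set dom Φ(G) ⊆ ℕ is not R-cohesive. -/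
open MeasureTheory

namespace CohAux

theorem cand {α} [Primcodable α] {f g : α → Bool} (hf : Computable f) (hg : Computable g) :
    Computable fun a => f a && g a := Primrec.and.to_comp.comp hf hg

theorem cor {α} [Primcodable α] {f g : α → Bool} (hf : Computable f) (hg : Computable g) :
    Computable fun a => f a || g a := Primrec.or.to_comp.comp hf hg

theorem cnot {α} [Primcodable α] {f : α → Bool} (hf : Computable f) :
    Computable fun a => !f a := Primrec.not.to_comp.comp hf

theorem cbeq {α β} [Primcodable α] [Primcodable β] [DecidableEq β] {f g : α → β}
    (hf : Computable f) (hg : Computable g) :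
    Computable fun a => f a == g a := Primrec.beq.to_comp.comp hf hg

theorem clt {α} [Primcodable α] {f g : α → ℕ} (hf : Computable f) (hg : Computable g) :
    Computable fun a => decide (f a < g a) :=
  (Primrec.nat_lt.decide.to_comp.comp hf hg :)

theorem cle {α} [Primcodable α] {f g : α → ℕ} (hf : Computable f) (hg : Computable g) :
    Computable fun a => decide (f a ≤ g a) :=
  (Primrec.nat_le.decide.to_comp.comp hf hg :)

/-- bounded universal quantification -/
def ball (p : ℕ → Bool) (n : ℕ) : Bool := Nat.rec true (fun i acc => acc && p i) n

theorem ball_iff (p : ℕ → Bool) (n : ℕ) : ball p n = true ↔ ∀ i < n, p i = true := by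
  induction n with
  | zero => simp [ball]
  | succ n ih =>
    have : ball p (n+1) = (ball p n && p n) := rfl
    rw [this, Bool.and_eq_true, ih]
    constructor
    · rintro ⟨h1, h2⟩ i hi
      rcases Nat.lt_succ_iff_lt_or_eq.1 hi with h | rfl
      · exact h1 i h
      · exact h2
    · intro h
      exact ⟨fun i hi => h i (by omega), h n (by omega)⟩

theorem cball {α} [Primcodable α] {p : α → ℕ → Bool} {f : α → ℕ}
    (hp : Computable₂ p) (hf : Computable f) : Computable fun a => ball (p a) (f a) := by
  have h : Computable₂ fun (a : α) (q : ℕ × Bool) => q.2 && p a q.1 :=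
    cand (Computable.snd.comp Computable.snd)
      (hp.comp Computable.fst (Computable.fst.comp Computable.snd))
  exact Computable.nat_rec hf (Computable.const true) h

theorem cfind {α} [Primcodable α] {p : α → ℕ → Bool} (hp : Computable₂ p)
    (h : ∀ a, ∃ n, p a n = true) : Computable fun a => Nat.find (h a) := by
  refine Computable.find (P := fun a n => p a n = true) ⟨inferInstance, ?_⟩ h
  refine Computable.of_eq (f := fun q : α × ℕ => p q.1 q.2) hp ?_
  intro q; simp

/-- total decoding -/
def dec (α) [Primcodable α] [Inhabited α] (n : ℕ) : α :=
  (Encodable.decode (α := α) n).getD default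

theorem dec_surj (α) [Primcodable α] [Inhabited α] : Function.Surjective (dec α) :=
  fun a => ⟨Encodable.encode a, by simp [dec]⟩

theorem cdec (α) [Primcodable α] [Inhabited α] : Computable (dec α) :=
  Computable.option_getD Computable.decode (Computable.const _)

theorem exists_stage {α β} [Primcodable α] [Primcodable β] {p : α →. β} (hp : Partrec p) :
    ∃ H : α → ℕ → Bool, Computable₂ H ∧ ∀ a, (p a).Dom ↔ ∃ k, H a k = true := by
  obtain ⟨c, hc⟩ := Nat.Partrec.Code.exists_code.1 hp
  refine ⟨fun a k => (Nat.Partrec.Code.evaln k c (Encodable.encode a)).isSome, ?_, ?_⟩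
  · have h : Computable fun q : α × ℕ => ((q.2, c), Encodable.encode q.1) :=
      (Computable.snd.pair (Computable.const c)).pair (Computable.encode.comp Computable.fst)
    exact Primrec.option_isSome.to_comp.comp (Nat.Partrec.Code.primrec_evaln.to_comp.comp h)
  · intro a
    have h1 : (p a).Dom ↔ (c.eval (Encodable.encode a)).Dom := by
      rw [hc]; simp
    rw [h1, Part.dom_iff_mem]
    simp only [Nat.Partrec.Code.evaln_complete, Option.isSome_iff_exists]
    rw [exists_comm]; rfl

theorem sigma3_mk {α β γ} [Primcodable α] [Inhabited α] [Primcodable β] [Inhabited β]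
    [Primcodable γ] [Inhabited γ] (P : BinStr → α → β → γ → Bool)
    (hP : Computable fun q : BinStr × α × β × γ => P q.1 q.2.1 q.2.2.1 q.2.2.2) :
    Sigma3 {σ | ∃ a, ∀ b, ∃ c, P σ a b c = true} := by
  refine ⟨fun σ a b c => P σ (dec α a) (dec β b) (dec γ c), ?_, ?_⟩
  · have : Computable fun q : BinStr × ℕ × ℕ × ℕ =>
        (q.1, dec α q.2.1, dec β q.2.2.1, dec γ q.2.2.2) :=
      Computable.fst.pair (((cdec α).comp (Computable.fst.comp Computable.snd)).pair
        (((cdec β).comp (Computable.fst.comp (Computable.snd.comp Computable.snd))).pair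
        ((cdec γ).comp (Computable.snd.comp (Computable.snd.comp Computable.snd)))))
    exact hP.comp this
  · intro σ
    rw [Set.mem_ofPred_eq, (dec_surj α).exists]
    refine exists_congr fun a => ?_
    rw [(dec_surj β).forall]
    refine forall_congr' fun b => ?_
    rw [(dec_surj γ).exists]

theorem seg_comparable {σ τ : BinStr} {X : ℕ → Bool} (h1 : IsInitSeg σ X) (h2 : IsInitSeg τ X) :
    σ <+: τ ∨ τ <+: σ := by
  have key : ∀ {σ τ : BinStr}, IsInitSeg σ X → IsInitSeg τ X → σ.length ≤ τ.length → σ <+: τ := by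
    intro σ τ h1 h2 hl
    rw [List.prefix_iff_getElem]
    refine ⟨hl, fun i hi => ?_⟩
    have a := h1 i hi
    have b := h2 i (by omega)
    rw [List.getD_eq_getElem _ _ hi] at a
    rw [List.getD_eq_getElem _ _ (by omega)] at b
    rw [a, b]
  rcases le_total σ.length τ.length with h | h
  · exact Or.inl (key h1 h2 h)
  · exact Or.inr (key h2 h1 h)

theorem seg_common {σ τ : BinStr} {X : ℕ → Bool} (h1 : IsInitSeg σ X) (h2 : IsInitSeg τ X) :
    ∃ ρ, IsInitSeg ρ X ∧ σ <+: ρ ∧ τ <+: ρ := by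
  rcases seg_comparable h1 h2 with h | h
  · exact ⟨τ, h2, h, List.prefix_rfl⟩
  · exact ⟨σ, h1, List.prefix_rfl, h⟩

/-- From a limit computable sequence of sides with infinite intersections to a computable
cohesive set. -/
theorem coh_of_limit (R : ℕ → Set ℕ) (f : ℕ → ℕ → Bool) (hf : Computable₂ f)
    (hR : ∀ n x, x ∈ R n ↔ f n x = true) (g : ℕ → ℕ → Bool) (hg : Computable₂ g)
    (b : ℕ → Bool) (hlim : ∀ i, ∃ T, ∀ s, T ≤ s → g i s = b i)
    (hinf : ∀ n N, ∃ c, N < c ∧ ∀ i < n, f i c = b i) :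
    ∃ C : Set ℕ, ComputableSet C ∧ Cohesive R C := by
  let p : ℕ × ℕ → ℕ → Bool := fun a w =>
    (decide (a.1 ≤ (dec (ℕ × ℕ) w).1) && decide (a.2 < (dec (ℕ × ℕ) w).2)) &&
      ball (fun i => f i (dec (ℕ × ℕ) w).2 == g i (dec (ℕ × ℕ) w).1) a.1
  have cd : Computable fun q : (ℕ × ℕ) × ℕ => dec (ℕ × ℕ) q.2 := (cdec _).comp Computable.snd
  have hp : Computable₂ p := by
    refine cand (cand (cle (Computable.fst.comp Computable.fst) (Computable.fst.comp cd))
      (clt (Computable.snd.comp Computable.fst) (Computable.snd.comp cd))) ?_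
    refine cball (p := fun (q : (ℕ × ℕ) × ℕ) i =>
      f i (dec (ℕ × ℕ) q.2).2 == g i (dec (ℕ × ℕ) q.2).1) ?_ (Computable.fst.comp Computable.fst)
    exact cbeq (hf.comp Computable.snd (Computable.snd.comp (cd.comp Computable.fst)))
      (hg.comp Computable.snd (Computable.fst.comp (cd.comp Computable.fst)))
  have hex : ∀ a, ∃ w, p a w = true := by
    rintro ⟨n, N⟩
    choose T hT using hlim
    obtain ⟨c, hc, hcf⟩ := hinf n N
    obtain ⟨w, hw⟩ := dec_surj (ℕ × ℕ) (n + ∑ i ∈ Finset.range n, T i, c)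
    refine ⟨w, ?_⟩
    simp only [p, hw, Bool.and_eq_true, decide_eq_true_eq, ball_iff, beq_iff_eq]
    refine ⟨⟨by omega, hc⟩, fun i hi => ?_⟩
    rw [hcf i hi, hT i]
    have := Finset.single_le_sum (f := T) (fun _ _ => Nat.zero_le _) (Finset.mem_range.2 hi)
    omega
  let step : ℕ × ℕ → ℕ := fun a => (dec (ℕ × ℕ) (Nat.find (hex a))).2
  have hstep : Computable step := Computable.snd.comp ((cdec _).comp (cfind hp hex))
  let seq : ℕ → ℕ := fun n => Nat.rec 0 (fun y IH => step (y, IH)) n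
  have hseq : Computable seq :=
    Computable.nat_rec Computable.id (Computable.const 0) (hstep.comp Computable.snd).to₂
  have seq_succ : ∀ n, seq (n+1) = step (n, seq n) := fun n => rfl
  have spec : ∀ n, ∃ t, n ≤ t ∧ seq n < seq (n+1) ∧ ∀ i < n, f i (seq (n+1)) = g i t := by
    intro n
    have := Nat.find_spec (hex (n, seq n))
    simp only [p, Bool.and_eq_true, decide_eq_true_eq, ball_iff, beq_iff_eq] at this
    exact ⟨_, this.1.1, this.1.2, this.2⟩
  have mono : StrictMono seq := strictMono_nat_of_lt_succ fun n => (spec n).choose_spec.2.1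
  refine ⟨Set.range seq, ⟨fun m => !(ball (fun i => !(seq i == m)) (m+1)), ?_, ?_⟩, ?_, ?_⟩
  · refine cnot (cball (p := fun m i => !(seq i == m)) ?_ Computable.succ)
    exact cnot (cbeq (hseq.comp Computable.snd) Computable.fst)
  · intro m
    rw [Bool.not_eq_true', ← Bool.not_eq_true, ball_iff]
    push Not
    constructor
    · rintro ⟨i, rfl⟩
      exact ⟨i, Nat.lt_succ_of_le mono.le_apply, by simp⟩
    · rintro ⟨i, _, hi⟩
      exact ⟨i, by simpa using hi⟩
  · exact Set.infinite_range_of_injective mono.injective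
  · intro n
    obtain ⟨T, hT⟩ := hlim n
    have main : ∀ m, T + n + 1 ≤ m → f n (seq (m+1)) = b n := by
      intro m hm
      obtain ⟨t, ht, _, h⟩ := spec m
      rw [h n (by omega), hT t (by omega)]
    have fin : ∀ A : Set ℕ, (∀ m, T + n + 1 ≤ m → seq (m+1) ∈ A) →
        SubsetStar (Set.range seq) A := by
      intro A hA
      refine Set.Finite.subset ((Set.finite_Iio (T+n+2)).image seq) ?_
      rintro _ ⟨⟨m, rfl⟩, hm⟩
      refine ⟨m, ?_, rfl⟩
      by_contra hlt
      simp only [Set.mem_Iio, not_lt] at hlt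
      obtain ⟨k, rfl⟩ : ∃ k, m = k + 1 := ⟨m - 1, by omega⟩
      exact hm (hA k (by omega))
    cases hb : b n
    · refine Or.inr (fin _ fun m hm => ?_)
      rw [Set.mem_compl_iff, hR, main m hm, hb]; simp
    · refine Or.inl (fin _ fun m hm => ?_)
      rw [hR, main m hm, hb]

/-- The forcing situation below `σ` yields a limit computable sequence of sides. -/
theorem limit_of_forcing (f : ℕ → ℕ → Bool) (hf : Computable₂ f)
    (H : BinStr × ℕ → ℕ → Bool) (hH : Computable₂ H) (D : BinStr → Set ℕ)
    (hD : ∀ ρ x, x ∈ D ρ ↔ ∃ k, H (ρ, x) k = true) (σ : BinStr)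
    (hunb : ∀ τ, σ <+: τ → ∀ x, ∃ ζ, τ <+: ζ ∧ ∃ u, x < u ∧ u ∈ D ζ)
    (hdec : ∀ n τ, σ <+: τ → ∃ ρ x b, τ <+: ρ ∧ ∀ ζ, ρ <+: ζ → ∀ u, x < u → u ∈ D ζ → f n u = b) :
    ∃ g : ℕ → ℕ → Bool, Computable₂ g ∧ ∃ b : ℕ → Bool,
      (∀ i, ∃ T, ∀ s, T ≤ s → g i s = b i) ∧
      (∀ n N, ∃ c, N < c ∧ ∀ i < n, f i c = b i) := by
  let K := BinStr × ℕ × Bool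
  let W := BinStr × ℕ × ℕ
  let E : (ℕ × BinStr) × ℕ → ℕ → Bool := fun q w =>
    (decide ((dec K q.2).2.1 < (dec W w).2.1) &&
      H ((q.1.2 ++ (dec K q.2).1) ++ (dec W w).1, (dec W w).2.1) (dec W w).2.2) &&
      !(f q.1.1 (dec W w).2.1 == (dec K q.2).2.2)
  have hE : Computable₂ E := by
    have dW : Computable fun q : ((ℕ × BinStr) × ℕ) × ℕ => dec W q.2 :=
      (cdec W).comp Computable.snd
    have dK : Computable fun q : ((ℕ × BinStr) × ℕ) × ℕ => dec K q.1.2 :=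
      (cdec K).comp (Computable.snd.comp Computable.fst)
    have du := Computable.fst.comp (Computable.snd.comp dW)
    refine cand (cand (clt (Computable.fst.comp (Computable.snd.comp dK)) du) ?_) ?_
    · refine hH.comp (Computable.pair ?_ du) (Computable.snd.comp (Computable.snd.comp dW))
      exact Computable.list_append.comp (Computable.list_append.comp
        (Computable.snd.comp (Computable.fst.comp Computable.fst)) (Computable.fst.comp dK))
        (Computable.fst.comp dW)
    · exact cnot (cbeq (hf.comp (Computable.fst.comp (Computable.fst.comp Computable.fst)) du)
        (Computable.snd.comp (Computable.snd.comp dK)))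
  -- meaning of never being refuted
  have hEmean : ∀ n ρ k, (∀ w, E ((n, ρ), k) w = false) →
      ∀ ζ, (ρ ++ (dec K k).1) <+: ζ → ∀ u, (dec K k).2.1 < u → u ∈ D ζ →
        f n u = (dec K k).2.2 := by
    rintro n ρ k h _ ⟨ζ, rfl⟩ u hu hud
    obtain ⟨j, hj⟩ := (hD _ _).1 hud
    obtain ⟨w, hw⟩ := dec_surj W (ζ, u, j)
    have := h w
    simp only [E, hw] at this
    rw [List.append_assoc] at hj
    simpa [hu, hj] using this
  have hEex : ∀ n ρ, σ <+: ρ → ∃ k, ∀ w, E ((n, ρ), k) w = false := by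
    intro n ρ hρ
    obtain ⟨_, x, b, ⟨τ, rfl⟩, h⟩ := hdec n ρ hρ
    obtain ⟨k, hk⟩ := dec_surj K (τ, x, b)
    refine ⟨k, fun w => ?_⟩
    by_contra hw
    simp only [E, hk, Bool.not_eq_false, Bool.and_eq_true, decide_eq_true_eq,
      Bool.not_eq_true', beq_eq_false_iff_ne] at hw
    exact hw.2 (h _ (List.prefix_append _ _) _ hw.1.1 ((hD _ _).2 ⟨_, hw.1.2⟩))
  -- stage s search
  let p : ℕ × ℕ × BinStr → ℕ → Bool := fun a k =>
    decide (a.2.1 ≤ k) || ball (fun w => !(E ((a.1, a.2.2), k) w)) a.2.1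
  have hp : Computable₂ p := by
    have hs : Computable fun q : (ℕ × ℕ × BinStr) × ℕ => q.1.2.1 :=
      Computable.fst.comp (Computable.snd.comp Computable.fst)
    refine cor (cle hs Computable.snd) ?_
    refine cball (p := fun (q : (ℕ × ℕ × BinStr) × ℕ) w =>
      !(E ((q.1.1, q.1.2.2), q.2) w)) ?_ hs
    refine cnot (hE.comp (Computable.pair (Computable.pair ?_ ?_) ?_) Computable.snd)
    · exact Computable.fst.comp (Computable.fst.comp Computable.fst)
    · exact Computable.snd.comp (Computable.snd.comp (Computable.fst.comp Computable.fst))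
    · exact Computable.snd.comp Computable.fst
  have hex : ∀ a, ∃ k, p a k = true := fun a => ⟨a.2.1, by simp [p]⟩
  let κ : ℕ × ℕ × BinStr → ℕ := fun a => Nat.find (hex a)
  have hκ : Computable κ := cfind hp hex
  have hκlim : ∀ n ρ, σ <+: ρ → ∃ k, (∀ w, E ((n, ρ), k) w = false) ∧
      ∃ T, ∀ s, T ≤ s → κ (n, s, ρ) = k := by
    intro n ρ hρ
    classical
    refine ⟨Nat.find (hEex n ρ hρ), Nat.find_spec (hEex n ρ hρ), ?_⟩
    set k := Nat.find (hEex n ρ hρ) with hk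
    have hsmall : ∀ j, ∃ w, j < k → E ((n, ρ), j) w = true := by
      intro j
      by_cases hj : j < k
      · have := Nat.find_min (hEex n ρ hρ) hj
        push Not at this
        obtain ⟨w, hw⟩ := this
        exact ⟨w, fun _ => by simpa using hw⟩
      · exact ⟨0, fun h => absurd h hj⟩
    choose v hv using hsmall
    refine ⟨k + 1 + ∑ j ∈ Finset.range k, v j, fun s hs => ?_⟩
    refine (Nat.find_eq_iff (hex (n, s, ρ))).2 ⟨?_, ?_⟩
    · simp only [p, Bool.or_eq_true, ball_iff]
      exact Or.inr fun i _ => by simp [Nat.find_spec (hEex n ρ hρ) i, hk]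
    · intro j hj
      simp only [p, Bool.or_eq_true, ball_iff, decide_eq_true_eq, not_or]
      refine ⟨by omega, fun h => ?_⟩
      have h1 := Finset.single_le_sum (f := v) (fun _ _ => Nat.zero_le _) (Finset.mem_range.2 hj)
      have := h (v j) (by omega)
      simp [hv j hj] at this
  -- the chain of strings
  let r : ℕ → ℕ → BinStr := fun s n =>
    Nat.rec σ (fun y IH => IH ++ (dec K (κ (y, s, IH))).1) n
  have hr : Computable fun q : ℕ × ℕ => r q.2 q.1 := by
    refine Computable.nat_rec (f := fun q : ℕ × ℕ => q.1) (g := fun _ => σ)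
      (h := fun q (z : ℕ × BinStr) => z.2 ++ (dec K (κ (z.1, q.2, z.2))).1)
      Computable.fst (Computable.const σ) ?_
    have z2 : Computable fun q : (ℕ × ℕ) × (ℕ × BinStr) => q.2.2 :=
      Computable.snd.comp Computable.snd
    refine Computable.list_append.comp z2 (Computable.fst.comp ((cdec K).comp (hκ.comp ?_)))
    exact (Computable.fst.comp Computable.snd).pair
      ((Computable.snd.comp Computable.fst).pair z2)
  have r_succ : ∀ s n, r s (n+1) = r s n ++ (dec K (κ (n, s, r s n))).1 := fun _ _ => rfl
  have hrlim : ∀ n, ∃ ρ, σ <+: ρ ∧ ∃ T, ∀ s, T ≤ s → r s n = ρ := by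
    intro n
    induction n with
    | zero => exact ⟨σ, List.prefix_rfl, 0, fun _ _ => rfl⟩
    | succ n ih =>
      obtain ⟨ρ, hρ, T, hT⟩ := ih
      obtain ⟨k, _, T', hT'⟩ := hκlim n ρ hρ
      refine ⟨ρ ++ (dec K k).1, hρ.trans (List.prefix_append _ _), T + T', fun s hs => ?_⟩
      rw [r_succ, hT s (by omega), hT' s (by omega)]
  choose ρ hρ T hT using hrlim
  choose k hk T' hT' using fun n => hκlim n (ρ n) (hρ n)
  have ρ_succ : ∀ n, ρ (n+1) = ρ n ++ (dec K (k n)).1 := by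
    intro n
    have h1 := hT (n+1) (T (n+1) + T n + T' n) (by omega)
    rw [← h1, r_succ, hT n _ (by omega), hT' n _ (by omega)]
  have ρ_mono : ∀ i j, i ≤ j → ρ i <+: ρ j := by
    intro i j hij
    induction j, hij using Nat.le_induction with
    | base => exact List.prefix_rfl
    | succ j _ ih => exact ih.trans (by rw [ρ_succ]; exact List.prefix_append _ _)
  refine ⟨fun n s => (dec K (κ (n, s, r s n))).2.2, ?_, fun n => (dec K (k n)).2.2, ?_, ?_⟩
  · refine Computable.snd.comp (Computable.snd.comp ((cdec K).comp (hκ.comp ?_)))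
    exact Computable.fst.pair (Computable.snd.pair hr)
  · intro i
    refine ⟨T i + T' i, fun s hs => ?_⟩
    simp only
    rw [hT i s (by omega), hT' i s (by omega)]
  · intro n N
    obtain ⟨ζ, hζ, u, hu, hud⟩ := hunb (ρ n) (hρ n)
      (N + ∑ i ∈ Finset.range n, (dec K (k i)).2.1)
    refine ⟨u, by omega, fun i hi => ?_⟩
    have h1 := Finset.single_le_sum (f := fun i => (dec K (k i)).2.1)
      (fun _ _ => Nat.zero_le _) (Finset.mem_range.2 hi)
    refine hEmean i (ρ i) (k i) (hk i) ζ ?_ u (by omega) hud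
    rw [← ρ_succ]
    exact (ρ_mono (i+1) n hi).trans hζ

end CohAux

/-- **Theorem (Wang, Theorem 2.1).** If `R` is a computable sequence of subsets of `ℕ`
admitting no computable `R`-cohesive set, then for every `3`-generic `G` and every
use-monotone Turing functional `Φ`, the set `dom Φ(G)` is not `R`-cohesive. -/
theorem domF_of_three_generic_not_cohesive
    (R : ℕ → Set ℕ) (hR : ComputableSeq R)
    (hno : ¬ ∃ C : Set ℕ, ComputableSet C ∧ Cohesive R C) :
    ∀ G : ℕ → Bool, ThreeGeneric G →
      ∀ F : TuringFunctional, ¬ Cohesive R (F.domF G) := by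
  intro G hG F hcoh
  obtain ⟨f, hf, hRf⟩ := hR
  obtain ⟨H, hH, hHd⟩ := CohAux.exists_stage F.partrec
  have hD : ∀ ρ x, x ∈ F.domStr ρ ↔ ∃ k, H (ρ, x) k = true := fun ρ x => hHd (ρ, x)
  have hmono : ∀ {σ τ : BinStr}, σ <+: τ → ∀ {x}, x ∈ F.domStr σ → x ∈ F.domStr τ :=
    fun h x hx => F.mono h x hx
  apply hno
  -- not forced bounded
  have h0 : ∃ σ, IsInitSeg σ G ∧ ∀ τ, σ <+: τ → ∀ x, ∃ ζ, τ <+: ζ ∧ ∃ u, x < u ∧ u ∈ F.domStr ζ := by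
    have hS := CohAux.sigma3_mk (α := ℕ) (β := BinStr × ℕ × ℕ) (γ := ℕ)
      (fun σ x b _ => !(decide (x < b.2.1) && H (σ ++ b.1, b.2.1) b.2.2)) (by
        have hb : Computable fun q : BinStr × ℕ × (BinStr × ℕ × ℕ) × ℕ => q.2.2.1 :=
          Computable.fst.comp (Computable.snd.comp Computable.snd)
        have hu := Computable.fst.comp (Computable.snd.comp hb)
        refine CohAux.cnot (CohAux.cand
          (CohAux.clt (Computable.fst.comp Computable.snd) hu) ?_)
        exact hH.comp ((Computable.list_append.comp Computable.fst
          (Computable.fst.comp hb)).pair hu) (Computable.snd.comp (Computable.snd.comp hb)))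
    rcases hG _ hS with ⟨σ, hσ, x, hx⟩ | ⟨σ, hσ, h⟩
    · exfalso
      refine hcoh.1 ((Set.finite_Iic x).subset ?_)
      rintro u ⟨τ, hτ, hu⟩
      by_contra hxu
      simp only [Set.mem_Iic, not_le] at hxu
      obtain ⟨ρ, -, ⟨ρ', rfl⟩, h2⟩ := CohAux.seg_common hσ hτ
      obtain ⟨k, hk⟩ := (hD _ _).1 (hmono h2 hu)
      simpa [hxu, hk] using hx (ρ', u, k)
    · refine ⟨σ, hσ, fun τ hτ x => ?_⟩
      have := h τ hτ
      simp only [Set.mem_ofPred_eq, not_exists, not_forall] at this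
      obtain ⟨⟨ζ, u, k⟩, hb⟩ := this x
      have hb := hb 0
      simp only [Bool.not_eq_true, Bool.not_eq_false', Bool.and_eq_true, decide_eq_true_eq] at hb
      exact ⟨τ ++ ζ, List.prefix_append _ _, u, hb.1, (hD _ _).2 ⟨k, hb.2⟩⟩
  -- not forced split
  have h1 : ∃ σ, IsInitSeg σ G ∧ ∀ τ, σ <+: τ → ∀ n, ∃ ρ x, τ <+: ρ ∧ ∀ ζ, ρ <+: ζ →
      ∀ u v, x < u → x < v → u ∈ F.domStr ζ → v ∈ F.domStr ζ → f n u = f n v := by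
    have hQ : Computable fun q : (BinStr × ℕ × ℕ) × (ℕ × ℕ) × (ℕ × ℕ) =>
        (decide (q.1.2.2 < q.2.1.1) && decide (q.1.2.2 < q.2.2.1)) &&
        ((H (q.1.1, q.2.1.1) q.2.1.2 && H (q.1.1, q.2.2.1) q.2.2.2) &&
          !(f q.1.2.1 q.2.1.1 == f q.1.2.1 q.2.2.1)) := by
      have s : Computable fun q : (BinStr × ℕ × ℕ) × (ℕ × ℕ) × (ℕ × ℕ) => q.1.1 :=
        Computable.fst.comp Computable.fst
      have n : Computable fun q : (BinStr × ℕ × ℕ) × (ℕ × ℕ) × (ℕ × ℕ) => q.1.2.1 :=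
        Computable.fst.comp (Computable.snd.comp Computable.fst)
      have x : Computable fun q : (BinStr × ℕ × ℕ) × (ℕ × ℕ) × (ℕ × ℕ) => q.1.2.2 :=
        Computable.snd.comp (Computable.snd.comp Computable.fst)
      have u : Computable fun q : (BinStr × ℕ × ℕ) × (ℕ × ℕ) × (ℕ × ℕ) => q.2.1 :=
        Computable.fst.comp Computable.snd
      have v : Computable fun q : (BinStr × ℕ × ℕ) × (ℕ × ℕ) × (ℕ × ℕ) => q.2.2 :=
        Computable.snd.comp Computable.snd
      have u1 := Computable.fst.comp u
      have v1 := Computable.fst.comp v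
      exact CohAux.cand (CohAux.cand (CohAux.clt x u1) (CohAux.clt x v1))
        (CohAux.cand (CohAux.cand (hH.comp (s.pair u1) (Computable.snd.comp u))
          (hH.comp (s.pair v1) (Computable.snd.comp v)))
          (CohAux.cnot (CohAux.cbeq (hf.comp n u1) (hf.comp n v1))))
    generalize hQd : (fun q : (BinStr × ℕ × ℕ) × (ℕ × ℕ) × (ℕ × ℕ) =>
        (decide (q.1.2.2 < q.2.1.1) && decide (q.1.2.2 < q.2.2.1)) &&
        ((H (q.1.1, q.2.1.1) q.2.1.2 && H (q.1.1, q.2.2.1) q.2.2.2) &&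
          !(f q.1.2.1 q.2.1.1 == f q.1.2.1 q.2.2.1))) = Q at hQ
    have Qiff : ∀ ζ n x, (∃ c, Q ((ζ, n, x), c) = true) ↔ ∃ u v, x < u ∧ x < v ∧
        u ∈ F.domStr ζ ∧ v ∈ F.domStr ζ ∧ f n u ≠ f n v := by
      intro ζ n x
      subst hQd
      simp only [Bool.and_eq_true, decide_eq_true_eq, Bool.not_eq_true', beq_eq_false_iff_ne]
      constructor
      · rintro ⟨⟨⟨u, k⟩, ⟨v, l⟩⟩, ⟨h1, h2⟩, ⟨h3, h4⟩, h5⟩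
        exact ⟨u, v, h1, h2, (hD _ _).2 ⟨k, h3⟩, (hD _ _).2 ⟨l, h4⟩, h5⟩
      · rintro ⟨u, v, h1, h2, h3, h4, h5⟩
        obtain ⟨k, hk⟩ := (hD _ _).1 h3
        obtain ⟨l, hl⟩ := (hD _ _).1 h4
        exact ⟨⟨⟨u, k⟩, ⟨v, l⟩⟩, ⟨h1, h2⟩, ⟨hk, hl⟩, h5⟩
    have hS := CohAux.sigma3_mk (α := ℕ) (β := BinStr × ℕ) (γ := BinStr × (ℕ × ℕ) × (ℕ × ℕ))
      (fun σ n b c => Q (((σ ++ b.1) ++ c.1, n, b.2), c.2)) (by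
        have b : Computable fun q : BinStr × ℕ × (BinStr × ℕ) × (BinStr × (ℕ × ℕ) × (ℕ × ℕ)) =>
          q.2.2.1 := Computable.fst.comp (Computable.snd.comp Computable.snd)
        have c : Computable fun q : BinStr × ℕ × (BinStr × ℕ) × (BinStr × (ℕ × ℕ) × (ℕ × ℕ)) =>
          q.2.2.2 := Computable.snd.comp (Computable.snd.comp Computable.snd)
        refine hQ.comp (Computable.pair (Computable.pair ?_ (Computable.pair
          (Computable.fst.comp Computable.snd) (Computable.snd.comp b))) (Computable.snd.comp c))
        exact Computable.list_append.comp (Computable.list_append.comp Computable.fst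
          (Computable.fst.comp b)) (Computable.fst.comp c))
    rcases hG _ hS with ⟨σ, hσ, n, hn⟩ | ⟨σ, hσ, h⟩
    · exfalso
      -- bound from cohesiveness
      obtain ⟨x, hx⟩ : ∃ x, ∀ u v, x < u → x < v → u ∈ F.domF G → v ∈ F.domF G →
          f n u = f n v := by
        rcases hcoh.2 n with hc | hc
        · obtain ⟨x, hx⟩ := hc.bddAbove
          have key : ∀ u, x < u → u ∈ F.domF G → f n u = true := by
            intro u hu hud
            by_contra hne
            have := hx ⟨hud, fun hr => hne ((hRf _ _).1 hr)⟩
            omega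
          exact ⟨x, fun u v hu hv hud hvd => by rw [key u hu hud, key v hv hvd]⟩
        · obtain ⟨x, hx⟩ := hc.bddAbove
          have key : ∀ u, x < u → u ∈ F.domF G → f n u = false := by
            intro u hu hud
            by_contra hne
            have := hx ⟨hud, fun hr => hr ((hRf _ _).2 (by simpa using hne))⟩
            omega
          exact ⟨x, fun u v hu hv hud hvd => by rw [key u hu hud, key v hv hvd]⟩
      have hS2 := CohAux.sigma3_mk (α := ℕ) (β := ℕ) (γ := (ℕ × ℕ) × (ℕ × ℕ))
        (fun σ _ _ c => Q ((σ, n, x), c)) (by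
          exact hQ.comp (Computable.pair (Computable.pair Computable.fst (Computable.const (n, x)))
            (Computable.snd.comp (Computable.snd.comp Computable.snd))))
      rcases hG _ hS2 with ⟨τ, hτ, -, h⟩ | ⟨τ, hτ, h⟩
      · obtain ⟨u, v, h1, h2, h3, h4, h5⟩ := (Qiff _ _ _).1 (h 0)
        exact h5 (hx u v h1 h2 ⟨τ, hτ, h3⟩ ⟨τ, hτ, h4⟩)
      · obtain ⟨ρ, -, ⟨ρ', rfl⟩, h2⟩ := CohAux.seg_common hσ hτ
        obtain ⟨⟨ζ, c⟩, hc⟩ := hn (ρ', x)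
        exact h _ (h2.trans (List.prefix_append _ ζ)) ⟨0, fun _ => ⟨c, hc⟩⟩
    · refine ⟨σ, hσ, fun τ hτ n => ?_⟩
      have := h τ hτ
      simp only [Set.mem_ofPred_eq, not_exists, not_forall] at this
      obtain ⟨⟨ρ, x⟩, hb⟩ := this n
      refine ⟨τ ++ ρ, x, List.prefix_append _ _, ?_⟩
      rintro _ ⟨ζ, rfl⟩ u v hu hv hud hvd
      by_contra hne
      obtain ⟨c, hc⟩ := (Qiff (τ ++ ρ ++ ζ) n x).2 ⟨u, v, hu, hv, hud, hvd, hne⟩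
      exact hb (ζ, c) hc
  obtain ⟨σ0, hσ0, h0⟩ := h0
  obtain ⟨σ1, hσ1, h1⟩ := h1
  obtain ⟨σ, -, hs0, hs1⟩ := CohAux.seg_common hσ0 hσ1
  obtain ⟨g, hg, b, hlim, hinf⟩ := CohAux.limit_of_forcing f hf H hH F.domStr hD σ
    (fun τ hτ x => h0 τ (hs0.trans hτ) x) (by
      intro n τ hτ
      obtain ⟨ρ, x, hρ, h⟩ := h1 τ (hs1.trans hτ) n
      obtain ⟨ζ, hζ, u, hu, hud⟩ := h0 ρ ((hs0.trans hτ).trans hρ) x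
      refine ⟨ζ, x, f n u, hρ.trans hζ, fun ξ hξ v hv hvd => ?_⟩
      exact h ξ (hζ.trans hξ) v u hv hu hvd (hmono hξ hud))
  exact CohAux.coh_of_limit R f hf hRf g hg b hlim hinf
end

section
/- Let R = (R_n : n ∈ ℕ) be a computable sequence of subsets of ℕ that admits no computable R-cohesive set, and let Φ be a use-monotone Turing functional. Define D_0 := {τ : ∃x ∀ρ extending τ, the cardinality of dom Φ(ρ) is < x} and, for each n ∈ ℕ, D_{1,n} := {τ : for every ρ extending τ and every x, there exist ζ extending ρ and u, v > x with u, v ∈ dom Φ(ζ) and exactly one of u, v in R_n}. Then the set D_0 ∪ ⋃_{n ∈ ℕ} D_{1,n} of finite binary strings is dense. -/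
open MeasureTheory

namespace CohAux

def search (p : ℕ → Bool) (n : ℕ) : ℕ :=
  Nat.rec (motive := fun _ => ℕ) 0 (fun _ acc => cond (p acc) acc (acc + 1)) n

theorem search_succ (p : ℕ → Bool) (n : ℕ) :
    search p (n + 1) = cond (p (search p n)) (search p n) (search p n + 1) := rfl

theorem search_spec (p : ℕ → Bool) (n : ℕ) :
    search p n ≤ n ∧ (∀ c < search p n, p c = false) ∧ (search p n < n → p (search p n) = true) := by
  induction n with
  | zero => simp [search]
  | succ n ih =>
    rw [search_succ]
    obtain ⟨h1, h2, h3⟩ := ih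
    cases h : p (search p n)
    · simp only [cond_false]
      have : search p n = n := by
        by_contra hne
        have := h3 (by omega)
        simp_all
      refine ⟨by omega, ?_, by omega⟩
      intro c hc
      rcases Nat.lt_succ_iff_lt_or_eq.1 hc with h' | h'
      · exact h2 c h'
      · rw [h']; exact h
    · simp only [cond_true]
      exact ⟨by omega, h2, fun _ => h⟩

theorem search_eq (p : ℕ → Bool) (n c : ℕ) (hc : c < n) (h : p c = true)
    (hmin : ∀ d < c, p d = false) : search p n = c := by
  obtain ⟨h1, h2, h3⟩ := search_spec p n
  rcases lt_trichotomy (search p n) c with h' | h' | h'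
  · have := hmin _ h'
    have := h3 (by omega)
    simp_all
  · exact h'
  · have := h2 _ h'
    simp_all

theorem search_eq_self (p : ℕ → Bool) (n : ℕ) :
    search p n = n ↔ ∀ d < n, p d = false := by
  obtain ⟨h1, h2, h3⟩ := search_spec p n
  constructor
  · intro h d hd
    exact h2 d (by omega)
  · intro h
    by_contra hne
    have := h _ (lt_of_le_of_ne h1 hne)
    have := h3 (by omega)
    simp_all

theorem search_computable {α : Type*} [Primcodable α] {p : α → ℕ → Bool} {n : α → ℕ}
    (hp : Computable₂ p) (hn : Computable n) : Computable fun a => search (p a) (n a) := by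
  refine Computable.nat_rec (h := fun a q => cond (p a q.2) q.2 (q.2 + 1)) hn (Computable.const 0) ?_
  have h2 : Computable fun q : α × ℕ × ℕ => q.2.2 := Computable.snd.comp Computable.snd
  exact (Computable.cond (hp.comp Computable.fst h2) h2 (Computable.succ.comp h2)).to₂

def pre (σ τ : BinStr) : Bool := decide (τ.take σ.length = σ)

theorem pre_iff (σ τ : BinStr) : pre σ τ = true ↔ σ <+: τ := by
  rw [pre, decide_eq_true_eq, List.prefix_iff_eq_take]
  exact eq_comm

theorem pre_computable : Computable₂ pre := by
  have h1 : Primrec fun p : BinStr × BinStr => p.2.take p.1.length :=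
    Primrec.list_take.comp (Primrec.list_length.comp Primrec.fst) Primrec.snd
  have h2 : Primrec fun p : BinStr × BinStr => decide (p.2.take p.1.length = p.1) :=
    (Primrec.eq.comp h1 Primrec.fst).decide
  exact h2.to_comp

theorem lt_computable : Computable₂ (fun a b : ℕ => decide (a < b)) :=
  (Primrec.nat_lt.decide).to_comp

theorem beq_computable {α : Type*} [Primcodable α] [DecidableEq α] :
    Computable₂ (fun a b : α => a == b) := Primrec.beq.to_comp

theorem and_computable : Computable₂ and := Primrec.and.to_comp

theorem exists_enum {α : Type*} [Primcodable α] (f : α →. ℕ) (hf : Partrec f) (a0 : α)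
    (h0 : (f a0).Dom) : ∃ e : ℕ → α, Computable e ∧ ∀ a, (f a).Dom ↔ ∃ t, e t = a := by
  obtain ⟨c, hc⟩ := Nat.Partrec.Code.exists_code.1 hf
  have key : ∀ a, (f a).Dom ↔ ∃ k, (Nat.Partrec.Code.evaln k c (Encodable.encode a)).isSome := by
    intro a
    have : (f a).Dom ↔ (c.eval (Encodable.encode a)).Dom := by
      rw [hc]; simp
    rw [this, Part.dom_iff_mem]
    simp only [Nat.Partrec.Code.evaln_complete, Option.isSome_iff_exists, Option.mem_def]
    exact exists_comm
  let d : ℕ → α × ℕ := fun t => (Encodable.decode (α := α × ℕ) t).getD (a0, 0)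
  have hd : Computable d := Computable.option_getD Computable.decode (Computable.const _)
  let e : ℕ → α := fun t => cond
    (Nat.Partrec.Code.evaln (d t).2 c (Encodable.encode (d t).1)).isSome (d t).1 a0
  refine ⟨e, ?_, ?_⟩
  · refine Computable.cond ?_ (Computable.fst.comp hd) (Computable.const _)
    exact Primrec.option_isSome.to_comp.comp (Nat.Partrec.Code.primrec_evaln.to_comp.comp
      (((Computable.snd.comp hd).pair (Computable.const c)).pair
        (Computable.encode.comp (Computable.fst.comp hd))))
  · intro a
    constructor
    · intro h
      obtain ⟨k, hk⟩ := (key a).1 h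
      refine ⟨Encodable.encode (a, k), ?_⟩
      simp only [e, d, Encodable.encodek, Option.getD_some, hk, cond_true]
    · rintro ⟨t, rfl⟩
      simp only [e]
      cases h : (Nat.Partrec.Code.evaln (d t).2 c (Encodable.encode (d t).1)).isSome
      · exact h0
      · exact (key _).2 ⟨_, h⟩

section
variable (e : ℕ → BinStr × ℕ) (f : ℕ → ℕ → Bool) (σ : BinStr)

/-- decode a candidate -/
def cand_s2 (c : ℕ) : BinStr × ℕ × Bool := (Encodable.decode (α := BinStr × ℕ × Bool) c).getD ([], 0, false)

theorem cand_computable : Computable cand_s2 :=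
  Computable.option_getD Computable.decode (Computable.const _)

theorem cand_surj (q : BinStr × ℕ × Bool) : ∃ c, cand_s2 c = q :=
  ⟨Encodable.encode q, by simp [cand_s2]⟩

/-- `t` refutes candidate `c` over `τ` for requirement `i` -/
def bad (a : (ℕ × BinStr) × ℕ) (t : ℕ) : Bool :=
  pre (a.1.2 ++ (cand_s2 a.2).1) (e t).1 && (decide ((cand_s2 a.2).2.1 < (e t).2)
    && ((f a.1.1 (e t).2) == (!(cand_s2 a.2).2.2)))

theorem bad_computable (he : Computable e) (hf : Computable₂ f) : Computable₂ (bad e f) := by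
  have hc : Computable fun q : ((ℕ × BinStr) × ℕ) × ℕ => cand_s2 q.1.2 :=
    cand_computable.comp (Computable.snd.comp Computable.fst)
  have hτ : Computable fun q : ((ℕ × BinStr) × ℕ) × ℕ => q.1.1.2 :=
    Computable.snd.comp (Computable.fst.comp Computable.fst)
  have hi : Computable fun q : ((ℕ × BinStr) × ℕ) × ℕ => q.1.1.1 :=
    Computable.fst.comp (Computable.fst.comp Computable.fst)
  have ht : Computable fun q : ((ℕ × BinStr) × ℕ) × ℕ => e q.2 := he.comp Computable.snd
  have h1 := pre_computable.comp (Computable.list_append.comp hτ (Computable.fst.comp hc))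
    (Computable.fst.comp ht)
  have h2 := lt_computable.comp (Computable.fst.comp (Computable.snd.comp hc))
    (Computable.snd.comp ht)
  have h3 := (beq_computable (α := Bool)).comp (hf.comp hi (Computable.snd.comp ht))
    (Primrec.not.to_comp.comp (Computable.snd.comp (Computable.snd.comp hc)))
  exact (and_computable.comp h1 (and_computable.comp h2 h3)).to₂

/-- candidate not refuted by stage `s`; `a = (s, i, τ)` -/
def ok (a : ℕ × ℕ × BinStr) (c : ℕ) : Bool := search (bad e f (a.2, c)) a.1 == a.1

theorem ok_computable (he : Computable e) (hf : Computable₂ f) : Computable₂ (ok e f) := by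
  have hs : Computable fun q : (ℕ × ℕ × BinStr) × ℕ => q.1.1 := Computable.fst.comp Computable.fst
  have h1 : Computable fun q : (ℕ × ℕ × BinStr) × ℕ => search (bad e f (q.1.2, q.2)) q.1.1 := by
    refine search_computable (p := fun (q : (ℕ × ℕ × BinStr) × ℕ) t => bad e f (q.1.2, q.2) t) ?_ hs
    exact ((bad_computable e f he hf).comp
      ((Computable.snd.comp (Computable.fst.comp Computable.fst)).pair
        (Computable.snd.comp Computable.fst)) Computable.snd).to₂
  exact ((beq_computable (α := ℕ)).comp h1 hs).to₂

def step (a : ℕ × ℕ × BinStr) : BinStr := a.2.2 ++ (cand_s2 (search (ok e f a) a.1)).1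

theorem step_computable (he : Computable e) (hf : Computable₂ f) : Computable (step e f) :=
  Computable.list_append.comp (Computable.snd.comp Computable.snd)
    (Computable.fst.comp (cand_computable.comp
      (search_computable (ok_computable e f he hf) Computable.fst)))

def g (s : ℕ) (i : ℕ) : BinStr :=
  Nat.rec (motive := fun _ => BinStr) σ (fun i τ => step e f (s, i, τ)) i

theorem g_succ (s i : ℕ) : g e f σ s (i + 1) = step e f (s, i, g e f σ s i) := rfl

theorem g_computable (he : Computable e) (hf : Computable₂ f) :
    Computable fun s => g e f σ s s := by
  refine Computable.nat_rec (h := fun s q => step e f (s, q.1, q.2)) Computable.id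
    (Computable.const σ) ?_
  exact ((step_computable e f he hf).comp (Computable.fst.pair Computable.snd)).to₂

theorem g_mono (s i j : ℕ) (h : i ≤ j) : g e f σ s i <+: g e f σ s j := by
  induction j, h using Nat.le_induction with
  | base => exact List.prefix_rfl
  | succ j _ ih => exact ih.trans (List.prefix_append _ _)

/-- true (unrefuted) candidate -/
def Good (i : ℕ) (τ : BinStr) (x : ℕ) (b : Bool) : Prop :=
  ∀ t, τ <+: (e t).1 → x < (e t).2 → f i (e t).2 = b

theorem bad_iff (i τ c t) : bad e f ((i, τ), c) t = true ↔
    (τ ++ (cand_s2 c).1 <+: (e t).1 ∧ (cand_s2 c).2.1 < (e t).2 ∧ f i (e t).2 ≠ (cand_s2 c).2.2) := by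
  simp only [bad, Bool.and_eq_true, pre_iff, decide_eq_true_eq, beq_iff_eq]
  cases f i (e t).2 <;> cases (cand_s2 c).2.2 <;> simp

theorem good_iff (i τ c) : Good e f i (τ ++ (cand_s2 c).1) (cand_s2 c).2.1 (cand_s2 c).2.2 ↔
    ∀ t, bad e f ((i, τ), c) t = false := by
  simp only [← Bool.not_eq_true, bad_iff, Good]
  grind

theorem ok_iff (s i τ c) : ok e f (s, i, τ) c = true ↔ ∀ t < s, bad e f ((i, τ), c) t = false := by
  simp [ok, search_eq_self]

theorem step_lim (i : ℕ) (τ : BinStr)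
    (h : ∃ ρ, τ <+: ρ ∧ ∃ x b, Good e f i ρ x b) :
    ∃ c T, Good e f i (τ ++ (cand_s2 c).1) (cand_s2 c).2.1 (cand_s2 c).2.2 ∧
      ∀ s ≥ T, search (ok e f (s, i, τ)) s = c := by
  classical
  have hex : ∃ c, Good e f i (τ ++ (cand_s2 c).1) (cand_s2 c).2.1 (cand_s2 c).2.2 := by
    obtain ⟨ρ, ⟨w, rfl⟩, x, b, hg⟩ := h
    obtain ⟨c, hc⟩ := cand_surj (w, x, b)
    exact ⟨c, by rw [hc]; exact hg⟩
  have hbad : ∀ d < Nat.find hex, ∃ t, bad e f ((i, τ), d) t = true := by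
    intro d hd
    have := Nat.find_min hex hd
    rw [good_iff] at this
    push Not at this
    obtain ⟨t, ht⟩ := this
    exact ⟨t, by simpa using ht⟩
  choose! t ht using hbad
  refine ⟨Nat.find hex, (Finset.range (Nat.find hex)).sup t + Nat.find hex + 1,
    Nat.find_spec hex, ?_⟩
  intro s hs
  refine search_eq _ _ _ (by omega) ?_ ?_
  · rw [ok_iff]
    intro t _
    exact (good_iff e f i τ _).1 (Nat.find_spec hex) t
  · intro d hd
    rw [← Bool.not_eq_true, ok_iff]
    intro hall
    have h1 : t d ≤ (Finset.range (Nat.find hex)).sup t :=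
      Finset.le_sup (f := t) (Finset.mem_range.2 hd)
    have h2 := hall (t d) (by omega)
    rw [ht d hd] at h2
    exact absurd h2 (by simp)

theorem g_lim_succ (i : ℕ) (τ : BinStr) (S : ℕ)
    (h : ∃ ρ, τ <+: ρ ∧ ∃ x b, Good e f i ρ x b)
    (hS : ∀ s ≥ S, g e f σ s i = τ) :
    ∃ τ' S' x b, τ <+: τ' ∧ (∀ s ≥ S', g e f σ s (i + 1) = τ') ∧ Good e f i τ' x b := by
  obtain ⟨c, T, hg, hc⟩ := step_lim e f i τ h
  refine ⟨τ ++ (cand_s2 c).1, max S T, _, _, List.prefix_append _ _, ?_, hg⟩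
  intro s hs
  rw [g_succ, hS s (le_trans (le_max_left _ _) hs)]
  simp [step, hc s (le_trans (le_max_right _ _) hs)]

theorem g_lim (hdense : ∀ i τ, σ <+: τ → ∃ ρ, τ <+: ρ ∧ ∃ x b, Good e f i ρ x b) (i : ℕ) :
    ∃ τ S, σ <+: τ ∧ ∀ s ≥ S, g e f σ s i = τ := by
  induction i with
  | zero => exact ⟨σ, 0, List.prefix_rfl, fun s _ => rfl⟩
  | succ i ih =>
    obtain ⟨τ, S, hτ, hS⟩ := ih
    obtain ⟨τ', S', x, b, h1, h2, h3⟩ := g_lim_succ e f σ i τ S (hdense i τ hτ) hS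
    exact ⟨τ', S', hτ.trans h1, h2⟩

theorem main (he : Computable e) (hf : Computable₂ f)
    (hdense : ∀ i τ, σ <+: τ → ∃ ρ, τ <+: ρ ∧ ∃ x b, Good e f i ρ x b)
    (hinf : ∀ τ, σ <+: τ → ∀ y, ∃ t, τ <+: (e t).1 ∧ y < (e t).2) :
    ∃ C : Set ℕ, ComputableSet C ∧ C.Infinite ∧
      ∀ i, ∃ N b, ∀ y ∈ C, N < y → f i y = b := by
  let P : ℕ × ℕ → ℕ → Prop := fun a t =>
    (pre (g e f σ a.1 a.1) (e t).1 && decide (a.2 < (e t).2)) = true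
  have hP : ∀ a, ∃ t, P a t := by
    intro a
    obtain ⟨t, h1, h2⟩ := hinf (g e f σ a.1 a.1) (g_mono e f σ a.1 0 a.1 (Nat.zero_le _)) a.2
    exact ⟨t, by simp [P, pre_iff, h1, h2]⟩
  have hPc : ComputablePred (fun p : (ℕ × ℕ) × ℕ => P p.1 p.2) := by
    refine ComputablePred.computable_iff.2 ⟨_, ?_, rfl⟩
    have ht : Computable fun q : (ℕ × ℕ) × ℕ => e q.2 := he.comp Computable.snd
    exact and_computable.comp
      (pre_computable.comp ((g_computable e f σ he hf).comp (Computable.fst.comp Computable.fst))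
        (Computable.fst.comp ht))
      (lt_computable.comp (Computable.snd.comp Computable.fst) (Computable.snd.comp ht))
  have hfind := Computable.find hPc hP
  let nxt : ℕ × ℕ → ℕ := fun a => (e (Nat.find (hP a))).2
  have hnxt : Computable nxt := Computable.snd.comp (he.comp hfind)
  have nxt_spec : ∀ a, ∃ t, nxt a = (e t).2 ∧ g e f σ a.1 a.1 <+: (e t).1 ∧ a.2 < (e t).2 := by
    intro a
    refine ⟨Nat.find (hP a), rfl, ?_⟩
    have := Nat.find_spec (hP a)
    simpa only [P, Bool.and_eq_true, pre_iff, decide_eq_true_eq] using this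
  let Y : ℕ → ℕ := fun s => Nat.rec (motive := fun _ => ℕ) 0 (fun s y => nxt (s, y)) s
  have hYs : ∀ s, Y (s + 1) = nxt (s, Y s) := fun _ => rfl
  have hY : Computable Y := by
    refine Computable.nat_rec (h := fun _ q => nxt q) Computable.id (Computable.const 0) ?_
    exact (hnxt.comp Computable.snd).to₂
  have hmono : StrictMono Y := by
    refine strictMono_nat_of_lt_succ fun s => ?_
    obtain ⟨t, h1, _, h3⟩ := nxt_spec (s, Y s)
    rw [hYs, h1]
    exact h3
  refine ⟨Set.range Y, ?_, Set.infinite_range_of_injective hmono.injective, ?_⟩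
  · refine ⟨fun n => Y (search (fun s => Y s == n) (n + 1)) == n, ?_, ?_⟩
    · refine (beq_computable (α := ℕ)).comp (hY.comp (search_computable
        (p := fun n s => Y s == n) ?_ Computable.succ)) Computable.id
      exact ((beq_computable (α := ℕ)).comp (hY.comp Computable.snd) Computable.fst).to₂
    · intro n
      constructor
      · rintro ⟨s, rfl⟩
        have hle := hmono.le_apply (x := s)
        have : search (fun s' => Y s' == Y s) (Y s + 1) = s := by
          refine search_eq _ _ _ (by omega) (by simp) ?_
          intro d hd
          have := hmono hd
          simp only [beq_eq_false_iff_ne]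
          omega
        simp [this]
      · intro h
        exact ⟨_, by simpa using h⟩
  · intro i
    obtain ⟨τ, S, hτ, hS⟩ := g_lim e f σ hdense i
    obtain ⟨τ', S', x, b, h1, h2, h3⟩ := g_lim_succ e f σ i τ S (hdense i τ hτ) hS
    refine ⟨max x (Y (max S' (i + 1))), b, ?_⟩
    rintro _ ⟨s, rfl⟩ hs
    have hs2 : max S' (i + 1) < s := hmono.lt_iff_lt.1 (lt_of_le_of_lt (le_max_right _ _) hs)
    have hsx : x < Y s := lt_of_le_of_lt (le_max_left _ _) hs
    obtain ⟨s, rfl⟩ : ∃ k, s = k + 1 := ⟨s - 1, by omega⟩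
    obtain ⟨t, k1, k2, _⟩ := nxt_spec (s, Y s)
    rw [hYs, k1] at hsx ⊢
    refine h3 t ?_ hsx
    rw [← h2 s (by omega)]
    exact (g_mono e f σ s (i + 1) s (by omega)).trans k2

end

end CohAux

/-- **Lemma 2.2 (density lemma).** If `R` is a computable sequence admitting no
computable `R`-cohesive set, then `D_{e,0} ∪ ⋃_n D_{e,1,n}` is dense. -/
theorem D0_union_D1_dense
    (R : ℕ → Set ℕ) (hR : ComputableSeq R)
    (hno : ¬ ∃ C : Set ℕ, ComputableSet C ∧ Cohesive R C)
    (F : TuringFunctional) :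
    ∀ σ : BinStr, ∃ τ : BinStr, σ <+: τ ∧ τ ∈ D0 F ∪ ⋃ n : ℕ, D1 R F n := by
  intro σ
  by_contra hcon
  push Not at hcon
  have hD0 : ∀ τ, σ <+: τ → τ ∉ D0 F := fun τ h h' => hcon τ h (Or.inl h')
  have hD1 : ∀ τ, σ <+: τ → ∀ n, τ ∉ D1 R F n := fun τ h n h' =>
    hcon τ h (Or.inr (Set.mem_iUnion.2 ⟨n, h'⟩))
  have hinf0 : ∀ τ, σ <+: τ → ∀ y, ∃ ρ u, τ <+: ρ ∧ y < u ∧ u ∈ F.domStr ρ := by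
    intro τ hτ y
    by_contra hno'
    push Not at hno'
    refine hD0 τ hτ ⟨y + 2, fun ρ hρ => ?_⟩
    have hsub : F.domStr ρ ⊆ ((Finset.range (y + 1) : Finset ℕ) : Set ℕ) := by
      intro u hu
      by_contra hlt
      simp only [Finset.coe_range, Set.mem_Iio] at hlt
      exact hno' ρ u hρ (by omega) hu
    refine lt_of_le_of_lt (Set.encard_le_encard hsub) ?_
    rw [Set.encard_coe_eq_coe_finsetCard, Finset.card_range]
    exact_mod_cast Nat.lt_succ_self _
  obtain ⟨f, hf, hRf⟩ := hR
  obtain ⟨ρ0, u0, _, _, h0⟩ := hinf0 σ List.prefix_rfl 0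
  obtain ⟨e, he, hdom⟩ := CohAux.exists_enum F.Φ F.partrec (ρ0, u0) h0
  have hinf : ∀ τ, σ <+: τ → ∀ y, ∃ t, τ <+: (e t).1 ∧ y < (e t).2 := by
    intro τ hτ y
    obtain ⟨ρ, u, h1, h2, h3⟩ := hinf0 τ hτ y
    obtain ⟨t, ht⟩ := (hdom (ρ, u)).1 h3
    exact ⟨t, by rw [ht]; exact ⟨h1, h2⟩⟩
  have hdense : ∀ i τ, σ <+: τ → ∃ ρ, τ <+: ρ ∧ ∃ x b, CohAux.Good e f i ρ x b := by
    intro i τ hτ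
    have h := hD1 τ hτ i
    simp only [D1, Set.mem_ofPred_eq] at h
    push Not at h
    obtain ⟨ρ, hρ, x, hx⟩ := h
    obtain ⟨t, h1, h2⟩ := hinf ρ (hτ.trans hρ) x
    refine ⟨(e t).1, hρ.trans h1, x, f i (e t).2, ?_⟩
    intro t' k1 k2
    have d1 : (F.Φ ((e t).1, (e t).2)).Dom := (hdom _).2 ⟨t, rfl⟩
    have d2 : (F.Φ ((e t').1, (e t').2)).Dom := (hdom _).2 ⟨t', rfl⟩
    have := hx (e t').1 (h1.trans k1) (e t').2 (e t).2 k2 h2 d2 (F.mono k1 _ d1)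
    rw [hRf, hRf] at this
    revert this
    cases f i (e t').2 <;> cases f i (e t).2 <;> simp
  obtain ⟨C, hC, hCi, hCc⟩ := CohAux.main e f σ he hf hdense hinf
  refine hno ⟨C, hC, hCi, fun n => ?_⟩
  obtain ⟨N, b, hb⟩ := hCc n
  cases b
  · right
    refine (Set.finite_Iic N).subset ?_
    rintro y ⟨hy, hyR⟩
    by_contra hlt
    have := hb y hy (by simpa using hlt)
    simp [hRf, this] at hyR
  · left
    refine (Set.finite_Iic N).subset ?_
    rintro y ⟨hy, hyR⟩
    by_contra hlt
    have := hb y hy (by simpa using hlt)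
    simp [hRf, this] at hyR
end

section
/- Let R = (R_n : n ∈ ℕ) be a computable sequence of subsets of ℕ that admits no computable R-cohesive set. Then there exists a Martin-Löf random X ∈ 2^ℕ such that no set C ⊆ ℕ with C ≤_T X is R-cohesive. -/
open MeasureTheory

/-! ### A small calculus of c.e. predicates -/

def Sig {α : Type*} [Primcodable α] (B : α → Prop) : Prop :=
  ∃ S : α → ℕ → Prop, PrimrecRel S ∧ ∀ a, B a ↔ ∃ s, S a s

namespace Sig

variable {α β γ : Type*} [Primcodable α] [Primcodable β] [Primcodable γ]

theorem of_eq {B B' : α → Prop} (h : Sig B) (e : ∀ a, B a ↔ B' a) : Sig B' := by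
  obtain ⟨S, hS, h⟩ := h
  exact ⟨S, hS, fun a => (e a).symm.trans (h a)⟩

theorem of_primrec {B : α → Prop} (h : PrimrecPred B) : Sig B :=
  ⟨fun a _ => B a, h.comp Primrec.fst, fun a => by simp⟩

theorem or {B B' : α → Prop} (h : Sig B) (h' : Sig B') : Sig fun a => B a ∨ B' a := by
  obtain ⟨S, hS, h⟩ := h
  obtain ⟨S', hS', h'⟩ := h'
  refine ⟨fun a s => S a s ∨ S' a s, PrimrecPred.or hS hS', fun a => ?_⟩
  simp only [h, h', exists_or]

theorem and {B B' : α → Prop} (h : Sig B) (h' : Sig B') : Sig fun a => B a ∧ B' a := by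
  obtain ⟨S, hS, h⟩ := h
  obtain ⟨S', hS', h'⟩ := h'
  refine ⟨fun a s => S a s.unpair.1 ∧ S' a s.unpair.2, PrimrecPred.and
    (PrimrecRel.comp hS Primrec.fst (Primrec.fst.comp (Primrec.unpair.comp Primrec.snd)))
    (PrimrecRel.comp hS' Primrec.fst (Primrec.snd.comp (Primrec.unpair.comp Primrec.snd))),
    fun a => ?_⟩
  show (B a ∧ B' a) ↔ _
  rw [h, h']
  constructor
  · rintro ⟨⟨s, hs⟩, t, ht⟩
    exact ⟨Nat.pair s t, by simpa using ⟨hs, ht⟩⟩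
  · rintro ⟨s, h1, h2⟩
    exact ⟨⟨_, h1⟩, _, h2⟩

theorem comp_primrec {B : β → Prop} (h : Sig B) {g : α → β} (hg : Primrec g) :
    Sig fun a => B (g a) := by
  obtain ⟨S, hS, h⟩ := h
  exact ⟨fun a s => S (g a) s, PrimrecRel.comp hS (hg.comp Primrec.fst) Primrec.snd,
    fun a => h _⟩

theorem exN {B : α → ℕ → Prop} (h : Sig fun q : α × ℕ => B q.1 q.2) : Sig fun a => ∃ b, B a b := by
  obtain ⟨S, hS, h⟩ := h
  refine ⟨fun a s => S (a, s.unpair.1) s.unpair.2, PrimrecRel.comp hS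
    (Primrec.pair Primrec.fst (Primrec.fst.comp (Primrec.unpair.comp Primrec.snd)))
    (Primrec.snd.comp (Primrec.unpair.comp Primrec.snd)), fun a => ?_⟩
  constructor
  · rintro ⟨b, hb⟩
    obtain ⟨s, hs⟩ := (h (a, b)).1 hb
    exact ⟨Nat.pair b s, by simpa using hs⟩
  · rintro ⟨s, hs⟩
    exact ⟨s.unpair.1, (h (a, _)).2 ⟨_, hs⟩⟩

theorem ex {B : α → β → Prop} (h : Sig fun q : α × β => B q.1 q.2) : Sig fun a => ∃ b, B a b := by
  obtain ⟨S, hS, h⟩ := h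
  have h1 : Sig fun q : α × ℕ => ∃ s, ∃ b ∈ (Encodable.decode (α := β) q.2).toList, S (q.1, b) s := by
    refine ⟨fun q s => ∃ b ∈ (Encodable.decode (α := β) q.2).toList, S (q.1, b) s, ?_, fun _ => Iff.rfl⟩
    have : PrimrecRel fun (b : β) (q : (α × ℕ) × ℕ) => S (q.1.1, b) q.2 :=
      PrimrecRel.comp hS (Primrec.pair
        (Primrec.fst.comp (Primrec.fst.comp Primrec.snd)) Primrec.fst)
        (Primrec.snd.comp Primrec.snd)
    exact PrimrecRel.comp (PrimrecRel.exists_mem_list this)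
      (Primrec.optionToList.comp (Primrec.decode.comp (Primrec.snd.comp Primrec.fst))) Primrec.id
  refine (exN (B := fun a n => ∃ s, ∃ b ∈ (Encodable.decode (α := β) n).toList, S (a, b) s) h1).of_eq fun a => ?_
  constructor
  · rintro ⟨n, s, b, -, hs⟩
    exact ⟨b, (h (a, b)).2 ⟨s, hs⟩⟩
  · rintro ⟨b, hb⟩
    obtain ⟨s, hs⟩ := (h (a, b)).1 hb
    exact ⟨Encodable.encode b, s, b, by simp, hs⟩

theorem all_mem {B : α → β → Prop} (h : Sig fun q : α × β => B q.1 q.2) {l : α → List β}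
    (hl : Primrec l) : Sig fun a => ∀ b ∈ l a, B a b := by
  obtain ⟨S, hS, h⟩ := h
  refine ⟨fun a s => ∀ b ∈ l a, ∃ t < s, S (a, b) t, ?_, fun a => ?_⟩
  · have h0 : PrimrecRel fun (t : ℕ) (q : β × (α × ℕ)) => S (q.2.1, q.1) t :=
      PrimrecRel.comp hS (Primrec.pair
        (Primrec.fst.comp (Primrec.snd.comp Primrec.snd)) (Primrec.fst.comp Primrec.snd)) Primrec.fst
    have h1 : PrimrecRel fun (b : β) (q : α × ℕ) => ∃ t < q.2, S (q.1, b) t := by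
      have h2 := PrimrecRel.comp (PrimrecRel.exists_mem_list h0) (f := fun q : β × (α × ℕ) => List.range q.2.2)
        (g := fun q => q) (Primrec.list_range.comp (Primrec.snd.comp Primrec.snd)) Primrec.id
      exact PrimrecPred.of_eq h2 fun q => by simp
    exact PrimrecRel.comp (PrimrecRel.forall_mem_list h1) (hl.comp Primrec.fst) Primrec.id
  · constructor
    · intro H
      have H' : ∀ b, ∃ t, b ∈ l a → S (a, b) t := fun b => by
        by_cases hb : b ∈ l a
        · obtain ⟨t, ht⟩ := (h (a, b)).1 (H b hb)
          exact ⟨t, fun _ => ht⟩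
        · exact ⟨0, fun h => absurd h hb⟩
      choose t ht using H'
      refine ⟨((l a).map t).sum + 1, fun b hb => ⟨t b, ?_, ht b hb⟩⟩
      exact Nat.lt_succ_of_le (List.single_le_sum (by simp) _ (List.mem_map_of_mem hb))
    · rintro ⟨s, hs⟩ b hb
      obtain ⟨t, -, ht⟩ := hs b hb
      exact (h (a, b)).2 ⟨t, ht⟩

theorem all_lt {B : α → ℕ → Prop} (h : Sig fun q : α × ℕ => B q.1 q.2) {l : α → ℕ}
    (hl : Primrec l) : Sig fun a => ∀ b < l a, B a b :=
  (all_mem h (Primrec.list_range.comp hl)).of_eq fun a => by simp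

theorem graph {f : α →. β} (hf : Partrec f) : Sig fun q : α × β => q.2 ∈ f q.1 := by
  obtain ⟨c, hc⟩ := Nat.Partrec.Code.exists_code.1 hf
  refine ⟨fun q s => Nat.Partrec.Code.evaln s c (Encodable.encode q.1) =
    some (Encodable.encode q.2), ?_, fun q => ?_⟩
  · exact PrimrecRel.comp Primrec.eq
      (Nat.Partrec.Code.primrec_evaln.comp (Primrec.pair (Primrec.pair Primrec.snd
        (Primrec.const c)) (Primrec.encode.comp (Primrec.fst.comp Primrec.fst))))
      (Primrec.option_some.comp (Primrec.encode.comp (Primrec.snd.comp Primrec.fst)))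
  · have : Encodable.encode q.2 ∈ c.eval (Encodable.encode q.1) ↔ q.2 ∈ f q.1 := by
      rw [hc]
      simp
    refine this.symm.trans ?_
    rw [Nat.Partrec.Code.evaln_complete]
    rfl

theorem dom {f : α →. β} (hf : Partrec f) : Sig fun a => (f a).Dom :=
  (ex (B := fun a b => b ∈ f a) (graph hf)).of_eq fun _ => Part.dom_iff_mem.symm

theorem comp {B : β → Prop} (h : Sig B) {g : α → β} (hg : Computable g) :
    Sig fun a => B (g a) := by
  have h1 : Sig fun q : α × β => q.2 ∈ (g : α →. β) q.1 ∧ B q.2 :=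
    (graph (f := (g : α →. β)) hg).and (h.comp_primrec Primrec.snd)
  refine (ex (B := fun a b => b ∈ (g : α →. β) a ∧ B b) h1).of_eq fun a => ?_
  simp

theorem select {B : α → β → Prop} (h : Sig fun q : α × β => B q.1 q.2) (hB : ∀ a, ∃ b, B a b) :
    ∃ g : α → β, Computable g ∧ ∀ a, B a (g a) := by
  classical
  obtain ⟨S, hS', h⟩ := h
  let F : α → ℕ → Option β := fun a n => (Encodable.decode (α := β) n.unpair.1).bind
    fun b => if S (a, b) n.unpair.2 then some b else none
  have hF : Primrec₂ F := by
    refine Primrec.option_bind (Primrec.decode.comp (Primrec.fst.comp (Primrec.unpair.comp Primrec.snd))) ?_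
    refine Primrec.ite ?_ (Primrec.option_some.comp Primrec.snd) (Primrec.const none)
    exact PrimrecRel.comp hS' (Primrec.pair (Primrec.fst.comp Primrec.fst) Primrec.snd)
      (Primrec.snd.comp (Primrec.unpair.comp (Primrec.snd.comp Primrec.fst)))
  have hFB : ∀ a n b, b ∈ F a n → B a b := by
    intro a n b hb
    simp only [F, Option.mem_def, Option.bind_eq_some_iff] at hb
    obtain ⟨b', -, hb⟩ := hb
    split_ifs at hb with hs
    cases hb
    exact (h (a, b)).2 ⟨_, hs⟩
  have hFdom : ∀ a, ∃ n b, b ∈ F a n := by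
    intro a
    obtain ⟨b, hb⟩ := hB a
    obtain ⟨s, hs⟩ := (h (a, b)).1 hb
    refine ⟨Nat.pair (Encodable.encode b) s, b, ?_⟩
    simp [F, hs]
  have hP : Partrec fun a => Nat.rfindOpt (F a) := Partrec.rfindOpt hF.to_comp
  have hd : ∀ a, (Nat.rfindOpt (F a)).Dom := fun a => Nat.rfindOpt_dom.2 (hFdom a)
  refine ⟨fun a => (Nat.rfindOpt (F a)).get (hd a), ?_, fun a => ?_⟩
  · exact hP.of_eq fun a => by simp
  · obtain ⟨n, hn⟩ := Nat.rfindOpt_spec (Part.get_mem (hd a))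
    exact hFB a n _ hn

end Sig

/-! ### Limit computable paths -/

theorem limit_path {A : List ℕ → ℕ → Prop} (hA : Sig fun q : List ℕ × ℕ => ¬ A q.1 q.2)
    {V : List ℕ → Prop} (h0 : V []) (h1 : ∀ p, V p → ∃ m, A p m)
    (h2 : ∀ p m, A p m → V (p ++ [m])) :
    ∃ e : ℕ → ℕ → ℕ, Primrec₂ e ∧ ∃ m : ℕ → ℕ, (∀ i, V ((List.range i).map m)) ∧
      ∀ i, ∀ᶠ t in Filter.atTop, e t i = m i := by
  classical
  obtain ⟨S, hS, hAS⟩ := hA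
  let pick : ℕ → List ℕ → ℕ := fun t p =>
    (List.range t).findIdx (fun m => decide (∀ s ∈ List.range t, ¬ S (p, m) s))
  have hpick : Primrec₂ pick := by
    have a1 : PrimrecRel fun (s : ℕ) (q : (ℕ × List ℕ) × ℕ) => ¬ S (q.1.2, q.2) s :=
      PrimrecPred.not (PrimrecRel.comp hS (Primrec.pair (Primrec.snd.comp (Primrec.fst.comp Primrec.snd))
        (Primrec.snd.comp Primrec.snd)) Primrec.fst)
    have a2 : PrimrecPred fun (q : (ℕ × List ℕ) × ℕ) => ∀ s ∈ List.range q.1.1, ¬ S (q.1.2, q.2) s :=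
      PrimrecRel.comp (PrimrecRel.forall_mem_list a1)
        (f := fun q : (ℕ × List ℕ) × ℕ => List.range q.1.1) (g := fun q => q)
        (Primrec.list_range.comp (Primrec.fst.comp Primrec.fst)) Primrec.id
    exact Primrec.list_findIdx (Primrec.list_range.comp Primrec.fst) a2.decide
  let g : ℕ → ℕ → List ℕ := fun t i => Nat.rec [] (fun _ l => l ++ [pick t l]) i
  have hg : Primrec₂ g := by
    refine Primrec.nat_rec (f := fun _ => []) (g := fun t (q : ℕ × List ℕ) => q.2 ++ [pick t q.2]) (Primrec.const _) ?_
    exact Primrec.list_concat.comp (Primrec.snd.comp Primrec.snd)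
      (hpick.comp Primrec.fst (Primrec.snd.comp Primrec.snd))
  let M : List ℕ → ℕ := fun p => sInf {m | A p m}
  let G : ℕ → List ℕ := fun i => Nat.rec [] (fun _ l => l ++ [M l]) i
  have hGs : ∀ i, G (i + 1) = G i ++ [M (G i)] := fun i => rfl
  have hgs : ∀ t i, g t (i + 1) = g t i ++ [pick t (g t i)] := fun t i => rfl
  have hVA : ∀ p, V p → A p (M p) := fun p hp => Nat.sInf_mem (h1 p hp)
  have hV : ∀ i, V (G i) := by
    intro i
    induction i with
    | zero => exact h0
    | succ i ih => rw [hGs]; exact h2 _ _ (hVA _ ih)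
  have hGm : ∀ i, G i = (List.range i).map (fun i => M (G i)) := by
    intro i
    induction i with
    | zero => rfl
    | succ i ih => rw [hGs, List.range_succ, List.map_append, ← ih]; rfl
  have hconv : ∀ p, V p → ∀ᶠ t in Filter.atTop, pick t p = M p := by
    intro p hp
    have hlt : ∀ m ∈ Finset.range (M p), ∀ᶠ t in Filter.atTop, ∃ s < t, S (p, m) s := by
      intro m hm
      have : ¬ A p m := Nat.notMem_of_lt_sInf (Finset.mem_range.1 hm)
      obtain ⟨s, hs⟩ := (hAS (p, m)).1 this
      filter_upwards [Filter.eventually_gt_atTop s] with t ht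
      exact ⟨s, ht, hs⟩
    have hlt' := (Filter.eventually_all_finset _).2 hlt
    filter_upwards [hlt', Filter.eventually_gt_atTop (M p)] with t ht htM
    show List.findIdx _ _ = _
    rw [List.findIdx_eq (by simpa using htM)]
    constructor
    · simp only [List.getElem_range, decide_eq_true_eq]
      intro s _ hs
      exact (hAS (p, M p)).2 ⟨s, hs⟩ (hVA p hp)
    · intro j hj
      simp only [List.getElem_range, decide_eq_false_iff_not]
      push Not
      obtain ⟨s, hs, hs'⟩ := ht j (Finset.mem_range.2 hj)
      exact ⟨s, by simpa using hs, hs'⟩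
  have hgconv : ∀ i, ∀ᶠ t in Filter.atTop, g t i = G i := by
    intro i
    induction i with
    | zero => exact Filter.Eventually.of_forall fun t => rfl
    | succ i ih =>
      filter_upwards [ih, hconv _ (hV i)] with t h1 h2
      rw [hGs, hgs, h1, h2]
  refine ⟨fun t i => pick t (g t i), hpick.comp₂ Primrec₂.left hg, fun i => M (G i), fun i => ?_,
    fun i => ?_⟩
  · rw [← hGm]; exact hV i
  · filter_upwards [hgconv i, hconv _ (hV i)] with t h1 h2
    rw [h1, h2]

theorem computable_cohesive {R : ℕ → Set ℕ} {f : ℕ → ℕ → Bool} (hf : Computable₂ f)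
    (hR : ∀ n x, x ∈ R n ↔ f n x = true) {e : ℕ → ℕ → Bool} (he : Primrec₂ e) {m : ℕ → Bool}
    (hm : ∀ i, ∀ᶠ t in Filter.atTop, e t i = m i)
    (hinf : ∀ n, {x | ∀ j < n, f j x = m j}.Infinite) :
    ∃ C, ComputableSet C ∧ Cohesive R C := by
  have hEq : Sig fun q : Bool × Bool => q.1 = q.2 :=
    Sig.of_primrec (PrimrecRel.comp Primrec.eq Primrec.fst Primrec.snd)
  let B : ℕ × ℕ → ℕ → Prop := fun a x => a.2 < x ∧ ∃ t, a.1 ≤ t ∧ ∀ j < a.1, f j x = e t j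
  have hB : Sig fun q : (ℕ × ℕ) × ℕ => B q.1 q.2 := by
    refine Sig.and (Sig.of_primrec (PrimrecRel.comp Primrec.nat_lt
      (Primrec.snd.comp Primrec.fst) Primrec.snd)) ?_
    refine Sig.ex (B := fun (q : (ℕ × ℕ) × ℕ) t => q.1.1 ≤ t ∧ ∀ j < q.1.1, f j q.2 = e t j) ?_
    refine Sig.and (Sig.of_primrec (PrimrecRel.comp Primrec.nat_le
      (Primrec.fst.comp (Primrec.fst.comp Primrec.fst)) Primrec.snd)) ?_
    refine Sig.all_lt (B := fun (r : ((ℕ × ℕ) × ℕ) × ℕ) j => f j r.1.2 = e r.2 j) ?_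
      (Primrec.fst.comp (Primrec.fst.comp Primrec.fst))
    refine Sig.comp hEq (g := fun z : (((ℕ × ℕ) × ℕ) × ℕ) × ℕ => (f z.2 z.1.1.2, e z.1.2 z.2)) ?_
    refine Computable.pair ?_ ?_
    · exact hf.comp Computable.snd (Computable.snd.comp (Computable.fst.comp Computable.fst))
    · exact he.to_comp.comp (Computable.snd.comp Computable.fst) Computable.snd
  obtain ⟨h, hh, hhB⟩ := hB.select (by
    rintro ⟨n, c⟩
    have : ∀ᶠ t in Filter.atTop, ∀ j ∈ Finset.range n, e t j = m j :=
      (Filter.eventually_all_finset _).2 fun i _ => hm i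
    obtain ⟨t, ht, htn⟩ := (this.and (Filter.eventually_ge_atTop n)).exists
    obtain ⟨x, hx, hcx⟩ := (hinf n).exists_gt c
    refine ⟨x, hcx, t, htn, fun j hj => ?_⟩
    rw [ht j (Finset.mem_range.2 hj)]
    exact hx j hj)
  let c : ℕ → ℕ := fun n => Nat.rec 0 (fun n c => h (n, c)) n
  have hcs : ∀ n, c (n + 1) = h (n, c n) := fun n => rfl
  have hc : Computable c := Computable.nat_rec (f := fun n => n) (g := fun _ => 0)
    (h := fun _ (q : ℕ × ℕ) => h q) Computable.id (Computable.const 0) (hh.comp Computable.snd)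
  have hmono : StrictMono c := strictMono_nat_of_lt_succ fun n => by
    rw [hcs]; exact (hhB (n, c n)).1
  refine ⟨Set.range c, ?_, Set.infinite_range_of_injective hmono.injective, ?_⟩
  · let D : ℕ → Bool → Prop := fun x b => (b = true ∧ ∃ n, c n = x) ∨
      (b = false ∧ ∃ n, c n < x ∧ x < c (n + 1))
    have hlt : Sig fun q : ℕ × ℕ => q.1 < q.2 :=
      Sig.of_primrec (PrimrecRel.comp Primrec.nat_lt Primrec.fst Primrec.snd)
    have hEqN : Sig fun q : ℕ × ℕ => q.1 = q.2 :=
      Sig.of_primrec (PrimrecRel.comp Primrec.eq Primrec.fst Primrec.snd)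
    have hD : Sig fun q : ℕ × Bool => D q.1 q.2 := by
      refine Sig.or (Sig.and ?_ ?_) (Sig.and ?_ ?_)
      · exact Sig.of_primrec (PrimrecRel.comp Primrec.eq Primrec.snd (Primrec.const _))
      · exact Sig.ex (B := fun (q : ℕ × Bool) n => c n = q.1)
          (Sig.comp hEqN (g := fun r : (ℕ × Bool) × ℕ => (c r.2, r.1.1))
          (Computable.pair (hc.comp Computable.snd) (Computable.fst.comp Computable.fst)))
      · exact Sig.of_primrec (PrimrecRel.comp Primrec.eq Primrec.snd (Primrec.const _))
      · exact Sig.ex (B := fun (q : ℕ × Bool) n => c n < q.1 ∧ q.1 < c (n + 1))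
          (Sig.and (Sig.comp hlt (g := fun r : (ℕ × Bool) × ℕ => (c r.2, r.1.1))
          (Computable.pair (hc.comp Computable.snd) (Computable.fst.comp Computable.fst)))
          (Sig.comp hlt (g := fun r : (ℕ × Bool) × ℕ => (r.1.1, c (r.2 + 1)))
          (Computable.pair (Computable.fst.comp Computable.fst)
            (hc.comp (Computable.succ.comp Computable.snd)))))
    have hbetween : ∀ x n k, c n < x → x < c (n + 1) → c k ≠ x := by
      rintro x n k h1 h2 rfl
      have := hmono.lt_iff_lt.1 h1
      have := (hmono.lt_iff_lt (a := k) (b := n + 1)).1 h2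
      omega
    have hc0 : c 0 = 0 := rfl
    have hfind : ∀ x, ∃ n, c n ≤ x ∧ x < c (n + 1) := by
      intro x
      have hex : x < c (x + 1) := lt_of_lt_of_le (Nat.lt_succ_self x) (hmono.id_le _)
      have hind : ∀ N, x < c N → ∃ n, c n ≤ x ∧ x < c (n + 1) := by
        intro N
        induction N with
        | zero => intro h; rw [hc0] at h; omega
        | succ N ih =>
          intro h
          rcases lt_or_ge x (c N) with h' | h'
          · exact ih h'
          · exact ⟨N, h', h⟩
      exact hind (x + 1) hex
    obtain ⟨d, hd, hdD⟩ := hD.select (by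
      intro x
      obtain ⟨n, hn1, hn2⟩ := hfind x
      rcases hn1.eq_or_lt with h | h
      · exact ⟨true, Or.inl ⟨rfl, n, h⟩⟩
      · exact ⟨false, Or.inr ⟨rfl, n, h, hn2⟩⟩)
    refine ⟨d, hd, fun x => ?_⟩
    rcases hdD x with ⟨h1, n, h2⟩ | ⟨h1, n, h2, h3⟩
    · simp only [h1, iff_true]
      exact ⟨n, h2⟩
    · simp only [h1, Bool.false_eq_true, iff_false]
      rintro ⟨k, hk⟩
      exact hbetween x n k h2 h3 hk
  · intro i
    obtain ⟨T, hT⟩ := Filter.eventually_atTop.1 (hm i)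
    have key : ∀ n, i < n → T ≤ n → f i (c (n + 1)) = m i := by
      intro n hin hTn
      obtain ⟨-, t, hnt, ht⟩ := hhB (n, c n)
      rw [hcs, ht i hin, hT t (hTn.trans hnt)]
    have hfin : ∀ P : Set ℕ, (∀ n, i < n → T ≤ n → c (n + 1) ∈ P) → SubsetStar (Set.range c) P := by
      intro P hP
      refine ((Finset.range (i + T + 2)).image c).finite_toSet.subset ?_
      rintro _ ⟨⟨n, rfl⟩, hn⟩
      simp only [Finset.coe_image, Set.mem_image, Finset.mem_coe, Finset.mem_range]
      refine ⟨n, ?_, rfl⟩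
      by_contra hlt
      obtain ⟨k, rfl⟩ : ∃ k, n = k + 1 := ⟨n - 1, by omega⟩
      exact hn (hP k (by omega) (by omega))
    cases hmi : m i
    · right
      refine hfin _ fun n h1 h2 => ?_
      rw [Set.mem_compl_iff, hR, key n h1 h2, hmi]
      simp
    · left
      refine hfin _ fun n h1 h2 => ?_
      rw [hR, key n h1 h2, hmi]

/-! ### Cantor space and the fair coin measure -/

def pre (X : ℕ → Bool) (n : ℕ) : BinStr := (List.range n).map X

theorem pre_length (X : ℕ → Bool) (n : ℕ) : (pre X n).length = n := by simp [pre]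

theorem isInitSeg_iff (σ : BinStr) (X : ℕ → Bool) : IsInitSeg σ X ↔ σ = pre X σ.length := by
  constructor
  · intro h
    refine List.ext_getElem (by simp [pre]) fun i h1 h2 => ?_
    have := h i h1
    rw [List.getD_eq_getElem _ _ h1] at this
    simp [pre, this]
  · intro h i hi
    rw [h]
    simp [pre, hi]

theorem isInitSeg_pre (X : ℕ → Bool) (n : ℕ) : IsInitSeg (pre X n) X := by
  rw [isInitSeg_iff, pre_length]

theorem pre_take (X : ℕ → Bool) (n t : ℕ) : (pre X t).take n = pre X (min n t) := by
  simp [pre, List.take_range, ← List.map_take]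

def opn (B : Set BinStr) : Set (ℕ → Bool) := ⋃ σ ∈ B, cyl σ

theorem mem_opn {B : Set BinStr} {X : ℕ → Bool} : X ∈ opn B ↔ ∃ n, pre X n ∈ B := by
  simp only [opn, Set.mem_iUnion, exists_prop, cyl, Set.mem_ofPred_eq]
  constructor
  · rintro ⟨σ, h1, h2⟩
    exact ⟨σ.length, by rwa [← (isInitSeg_iff _ _).1 h2]⟩
  · rintro ⟨n, hn⟩
    exact ⟨_, hn, isInitSeg_pre _ _⟩

theorem isOpen_cyl (σ : BinStr) : IsOpen (cyl σ) := by
  have : cyl σ = ⋂ i ∈ Set.Iio σ.length, {X : ℕ → Bool | X i = σ.getD i false} := by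
    ext X
    simp only [cyl, IsInitSeg, Set.mem_ofPred_eq, Set.mem_iInter, Set.mem_Iio]
    exact forall_congr' fun i => forall_congr' fun _ => eq_comm
  rw [this]
  refine (Set.finite_Iio _).isOpen_biInter fun i _ => ?_
  exact IsOpen.preimage (f := fun X : ℕ → Bool => X i) (continuous_apply i)
    (isOpen_discrete ({σ.getD i false} : Set Bool))

theorem measurableSet_cyl (σ : BinStr) : MeasurableSet (cyl σ) := by
  have : cyl σ = ⋂ i ∈ Set.Iio σ.length, {X : ℕ → Bool | X i = σ.getD i false} := by
    ext X
    simp only [cyl, IsInitSeg, Set.mem_ofPred_eq, Set.mem_iInter, Set.mem_Iio]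
    exact forall_congr' fun i => forall_congr' fun _ => eq_comm
  rw [this]
  refine MeasurableSet.biInter (Set.to_countable _) fun i _ => ?_
  have h : Measurable fun X : ℕ → Bool => X i := measurable_pi_apply i
  exact h (measurableSet_singleton (σ.getD i false))

theorem isOpen_opn (B : Set BinStr) : IsOpen (opn B) :=
  isOpen_biUnion fun σ _ => isOpen_cyl σ

theorem measurableSet_opn (B : Set BinStr) : MeasurableSet (opn B) :=
  MeasurableSet.biUnion (Set.to_countable _) fun σ _ => measurableSet_cyl σ

noncomputable def dig (x : ℝ) (n : ℕ) : Bool := decide (⌊x * 2 ^ (n + 1)⌋ % 2 = 1)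

theorem measurable_dig : Measurable dig := by
  refine measurable_pi_lambda _ fun n => ?_
  have h : Measurable fun z : ℤ => decide (z % 2 = 1) := measurable_from_top
  exact h.comp (Int.measurable_floor.comp (measurable_id.mul_const _))

theorem fairCoin_apply {A : Set (ℕ → Bool)} (hA : MeasurableSet A) :
    fairCoin A = volume (dig ⁻¹' A ∩ Set.Ico 0 1) := by
  change Measure.map dig _ _ = _
  rw [Measure.map_apply measurable_dig hA, Measure.restrict_apply (measurable_dig hA)]

instance : IsProbabilityMeasure fairCoin :=
  ⟨by rw [fairCoin_apply MeasurableSet.univ]; simp⟩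

def val (σ : BinStr) : ℤ := σ.foldl (fun a b => 2 * a + (if b then 1 else 0)) 0

theorem val_concat (σ : BinStr) (b : Bool) :
    val (σ ++ [b]) = 2 * val σ + (if b then 1 else 0) := by
  simp [val, List.foldl_append]

theorem val_bounds (σ : BinStr) : 0 ≤ val σ ∧ val σ + 1 ≤ 2 ^ σ.length := by
  induction σ using List.reverseRecOn with
  | nil => simp [val]
  | append_singleton σ b ih =>
    rw [val_concat, List.length_append, List.length_singleton, pow_succ]
    split_ifs <;> omega

theorem isInitSeg_concat (σ : BinStr) (b : Bool) (X : ℕ → Bool) :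
    IsInitSeg (σ ++ [b]) X ↔ IsInitSeg σ X ∧ b = X σ.length := by
  rw [isInitSeg_iff, isInitSeg_iff, List.length_append, List.length_singleton]
  simp only [pre, List.range_succ, List.map_append, List.map_cons, List.map_nil]
  constructor
  · intro h
    have := List.append_inj h (by simp)
    simpa using this
  · rintro ⟨h1, h2⟩
    rw [← h1, h2]

theorem floor_half (y : ℝ) : ⌊y * 2⌋ / 2 = ⌊y⌋ := by
  have h1 := Int.floor_le y
  have h2 := Int.lt_floor_add_one y
  have h3 : 2 * ⌊y⌋ ≤ ⌊y * 2⌋ := Int.le_floor.2 (by push_cast; linarith)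
  have h4 : ⌊y * 2⌋ < 2 * ⌊y⌋ + 2 := Int.floor_lt.2 (by push_cast; linarith)
  omega

theorem dig_iff (σ : BinStr) (x : ℝ) (hx : x ∈ Set.Ico (0 : ℝ) 1) :
    IsInitSeg σ (dig x) ↔ ⌊x * 2 ^ σ.length⌋ = val σ := by
  induction σ using List.reverseRecOn with
  | nil =>
    simp only [IsInitSeg, List.length_nil, pow_zero, mul_one, val, List.foldl_nil]
    simp only [not_lt_zero, false_imp_iff, implies_true, true_iff]
    exact Int.floor_eq_zero_iff.2 hx
  | append_singleton σ b ih =>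
    rw [isInitSeg_concat, ih, val_concat, List.length_append, List.length_singleton, dig]
    have := floor_half (x * 2 ^ σ.length)
    rw [mul_assoc, ← pow_succ] at this
    cases b <;> simp <;> omega

theorem fairCoin_cyl (σ : BinStr) : fairCoin.real (cyl σ) = 1 / 2 ^ σ.length := by
  have hp : (0 : ℝ) < 2 ^ σ.length := by positivity
  have : dig ⁻¹' cyl σ ∩ Set.Ico 0 1 =
      Set.Ico ((val σ : ℝ) / 2 ^ σ.length) ((val σ + 1 : ℝ) / 2 ^ σ.length) := by
    ext x
    have hiff : ⌊x * 2 ^ σ.length⌋ = val σ ↔ x ∈ Set.Ico ((val σ : ℝ) / 2 ^ σ.length)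
        ((val σ + 1 : ℝ) / 2 ^ σ.length) := by
      rw [Int.floor_eq_iff, Set.mem_Ico, div_le_iff₀ hp, lt_div_iff₀ hp]
    constructor
    · rintro ⟨h1, h2⟩
      exact hiff.1 ((dig_iff σ x h2).1 h1)
    · intro h
      obtain ⟨b1, b2⟩ := val_bounds σ
      have hx : x ∈ Set.Ico (0 : ℝ) 1 := by
        constructor
        · refine le_trans ?_ h.1
          have : (0 : ℝ) ≤ val σ := by exact_mod_cast b1
          positivity
        · refine lt_of_lt_of_le h.2 ?_
          rw [div_le_one hp]
          exact_mod_cast b2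
      exact ⟨(dig_iff σ x hx).2 (hiff.2 h), hx⟩
  rw [Measure.real, fairCoin_apply (measurableSet_cyl σ), this, Real.volume_Ico,
    ENNReal.toReal_ofReal]
  · ring
  · have : ((val σ + 1 : ℝ) / 2 ^ σ.length - (val σ : ℝ) / 2 ^ σ.length) = 1 / 2 ^ σ.length := by ring
    rw [this]; positivity

theorem fairCoin_finset (t : ℕ) (F : Finset BinStr) (hF : ∀ σ ∈ F, σ.length = t) :
    fairCoin.real (opn (F : Set BinStr)) = F.card / 2 ^ t := by
  have : opn (F : Set BinStr) = ⋃ σ ∈ F, cyl σ := by simp [opn]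
  rw [this, measureReal_biUnion_finset]
  · rw [Finset.sum_congr rfl fun σ hσ => by rw [fairCoin_cyl, hF σ hσ]]
    simp [div_eq_mul_inv]
  · intro σ hσ τ hτ hne
    refine Set.disjoint_left.2 fun X h1 h2 => hne ?_
    rw [(isInitSeg_iff _ _).1 h1, (isInitSeg_iff _ _).1 h2, hF σ hσ, hF τ hτ]
  · exact fun σ _ => measurableSet_cyl σ

theorem measure_lt_iff (B : Set BinStr) (k : ℕ) :
    fairCoin.real (opn B)ᶜ < 1 / (k + 1) ↔ ∃ t : ℕ, ∃ F : List BinStr, F.Nodup ∧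
      (∀ σ ∈ F, σ.length = t ∧ ∃ n, σ.take n ∈ B) ∧ 2 ^ t * k < F.length * (k + 1) := by
  classical
  have hk : (0 : ℝ) < k + 1 := by positivity
  have hcond : ∀ t N : ℕ, (2 ^ t * k < N * (k + 1) ↔ 1 - 1 / ((k : ℝ) + 1) < (N : ℝ) / 2 ^ t) := by
    intro t N
    rw [lt_div_iff₀ (by positivity)]
    have : (1 - 1 / ((k : ℝ) + 1)) * 2 ^ t = (2 ^ t * k) / (k + 1) := by field_simp; ring
    rw [this, div_lt_iff₀ hk]
    exact_mod_cast Iff.rfl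
  rw [probReal_compl_eq_one_sub (measurableSet_opn B)]
  constructor
  · intro h
    let Bt : ℕ → Set BinStr := fun t => {σ | σ.length = t ∧ ∃ n, σ.take n ∈ B}
    have hBt : ∀ t X, X ∈ opn (Bt t) ↔ ∃ n ≤ t, pre X n ∈ B := by
      intro t X
      rw [mem_opn]
      constructor
      · rintro ⟨m, h1, n, h2⟩
        rw [pre_length] at h1
        subst h1
        rw [pre_take] at h2
        exact ⟨_, min_le_right _ _, h2⟩
      · rintro ⟨n, hn, h⟩
        refine ⟨t, pre_length _ _, n, ?_⟩
        rw [pre_take, min_eq_left hn]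
        exact h
    have hU : opn B = ⋃ t, opn (Bt t) := by
      ext X
      simp only [Set.mem_iUnion, hBt, mem_opn]
      exact ⟨fun ⟨n, hn⟩ => ⟨n, n, le_rfl, hn⟩, fun ⟨_, n, _, hn⟩ => ⟨n, hn⟩⟩
    have hmono : Monotone fun t => opn (Bt t) := by
      intro s t hst X hX
      obtain ⟨n, hn, hX⟩ := (hBt s X).1 hX
      exact (hBt t X).2 ⟨n, hn.trans hst, hX⟩
    have hT := tendsto_measure_iUnion_atTop (μ := fairCoin) hmono
    rw [← hU] at hT
    have hT' := (ENNReal.tendsto_toReal (measure_ne_top fairCoin (opn B))).comp hT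
    have hlt : 1 - 1 / ((k : ℝ) + 1) < (fairCoin (opn B)).toReal := by
      change _ < fairCoin.real (opn B); linarith
    obtain ⟨t, ht⟩ := (hT'.eventually (lt_mem_nhds hlt)).exists
    have hfin : (Bt t).Finite := (List.finite_length_eq Bool t).subset fun σ h => h.1
    have hmem : ∀ σ, σ ∈ hfin.toFinset ↔ σ ∈ Bt t := fun σ => hfin.mem_toFinset
    refine ⟨t, hfin.toFinset.toList, Finset.nodup_toList _, fun σ hσ => ?_, ?_⟩
    · exact (hmem σ).1 (Finset.mem_toList.1 hσ)
    · rw [Finset.length_toList, hcond, ← fairCoin_finset t _ fun σ hσ => ((hmem σ).1 hσ).1,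
        hfin.coe_toFinset]
      exact ht
  · rintro ⟨t, F, hF, hB, hlen⟩
    rw [hcond, ← List.toFinset_card_of_nodup hF,
      ← fairCoin_finset t F.toFinset fun σ hσ => (hB σ (List.mem_toFinset.1 hσ)).1] at hlen
    have hsub : opn (F.toFinset : Set BinStr) ⊆ opn B := by
      intro X hX
      obtain ⟨n, hn⟩ := mem_opn.1 hX
      obtain ⟨-, m, hm⟩ := hB _ (List.mem_toFinset.1 (Finset.mem_coe.1 hn))
      rw [pre_take] at hm
      exact mem_opn.2 ⟨_, hm⟩
    have := measureReal_mono (μ := fairCoin) hsub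
    linarith

theorem sig_measure {α : Type*} [Primcodable α] {B : α → BinStr → Prop}
    (hB : Sig fun q : α × BinStr => B q.1 q.2) :
    Sig fun q : α × ℕ => fairCoin.real (opn {σ | B q.1 σ})ᶜ < 1 / ((q.2 : ℝ) + 1) := by
  have hpow : Primrec fun t : ℕ => 2 ^ t := by
    refine (Primrec.nat_rec₁ (f := fun _ n => n * 2) 1
      (Primrec.nat_mul.comp Primrec.snd (Primrec.const 2))).of_eq fun t => ?_
    induction t with
    | zero => rfl
    | succ t ih => rw [pow_succ, ← ih]
  have main : Sig fun q : α × ℕ => ∃ z : ℕ × List BinStr,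
      (∀ j < z.2.length, ∀ i < j, z.2[i]? ≠ z.2[j]?) ∧
      ((∀ σ ∈ z.2, σ.length = z.1 ∧ ∃ n, B q.1 (σ.take n)) ∧
        2 ^ z.1 * q.2 < z.2.length * (q.2 + 1)) := by
    refine Sig.ex (B := fun (q : α × ℕ) (z : ℕ × List BinStr) => (∀ j < z.2.length, ∀ i < j, z.2[i]? ≠ z.2[j]?) ∧
      ((∀ σ ∈ z.2, σ.length = z.1 ∧ ∃ n, B q.1 (σ.take n)) ∧
        2 ^ z.1 * q.2 < z.2.length * (q.2 + 1))) (Sig.and ?_ (Sig.and ?_ ?_))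
    · refine Sig.all_lt (B := fun (y : (α × ℕ) × (ℕ × List BinStr)) j => ∀ i < j, y.2.2[i]? ≠ y.2.2[j]?) ?_
        (Primrec.list_length.comp (Primrec.snd.comp Primrec.snd))
      refine Sig.all_lt (B := fun (y : ((α × ℕ) × (ℕ × List BinStr)) × ℕ) i => y.1.2.2[i]? ≠ y.1.2.2[y.2]?) ?_
        Primrec.snd
      refine Sig.of_primrec (PrimrecPred.not (PrimrecRel.comp Primrec.eq ?_ ?_))
      · exact Primrec.list_getElem?.comp (Primrec.snd.comp (Primrec.snd.comp (Primrec.fst.comp Primrec.fst))) Primrec.snd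
      · exact Primrec.list_getElem?.comp (Primrec.snd.comp (Primrec.snd.comp (Primrec.fst.comp Primrec.fst)))
          (Primrec.snd.comp Primrec.fst)
    · refine Sig.all_mem (B := fun (y : (α × ℕ) × (ℕ × List BinStr)) σ => σ.length = y.2.1 ∧
        ∃ n, B y.1.1 (σ.take n)) (Sig.and ?_ ?_) (Primrec.snd.comp Primrec.snd)
      · exact Sig.of_primrec (PrimrecRel.comp Primrec.eq (Primrec.list_length.comp Primrec.snd)
          (Primrec.fst.comp (Primrec.snd.comp Primrec.fst)))
      · refine Sig.ex (B := fun (y : ((α × ℕ) × (ℕ × List BinStr)) × BinStr) n => B y.1.1.1 (y.2.take n)) ?_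
        exact hB.comp_primrec (g := fun x : (((α × ℕ) × (ℕ × List BinStr)) × BinStr) × ℕ =>
          (x.1.1.1.1, x.1.2.take x.2)) (Primrec.pair
          (Primrec.fst.comp (Primrec.fst.comp (Primrec.fst.comp Primrec.fst)))
          (Primrec.list_take.comp Primrec.snd (Primrec.snd.comp Primrec.fst)))
    · refine Sig.of_primrec (PrimrecRel.comp Primrec.nat_lt ?_ ?_)
      · exact Primrec.nat_mul.comp (hpow.comp (Primrec.fst.comp Primrec.snd)) (Primrec.snd.comp Primrec.fst)
      · exact Primrec.nat_mul.comp (Primrec.list_length.comp (Primrec.snd.comp Primrec.snd))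
          (Primrec.succ.comp (Primrec.snd.comp Primrec.fst))
  refine main.of_eq fun q => ?_
  rw [measure_lt_iff]
  constructor
  · rintro ⟨⟨t, F⟩, h1, h2, h3⟩
    exact ⟨t, F, List.nodup_iff_getElem?_ne_getElem?.2 fun i j hij hj => h1 j hj i hij, h2, h3⟩
  · rintro ⟨t, F, h1, h2, h3⟩
    exact ⟨(t, F), fun j hj i hij => List.nodup_iff_getElem?_ne_getElem?.1 h1 i j hij hj, h2, h3⟩

/-! ### Forcing with effectively closed classes of positive measure -/

def IsPi (N : Set (ℕ → Bool)) : Prop := ∃ B : BinStr → Prop, Sig B ∧ N = (opn {σ | B σ})ᶜ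

def Cond (P : Set (ℕ → Bool)) : Prop := IsPi P ∧ fairCoin P ≠ 0

theorem mem_opn_compl {B : BinStr → Prop} {X : ℕ → Bool} :
    X ∈ (opn {σ | B σ})ᶜ ↔ ∀ n, ¬ B (pre X n) := by
  rw [Set.mem_compl_iff, mem_opn, not_exists]
  rfl

theorem IsPi.inter {N M : Set (ℕ → Bool)} (hN : IsPi N) (hM : IsPi M) : IsPi (N ∩ M) := by
  obtain ⟨B, hB, rfl⟩ := hN
  obtain ⟨B', hB', rfl⟩ := hM
  refine ⟨fun σ => B σ ∨ B' σ, hB.or hB', ?_⟩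
  ext X
  rw [Set.mem_inter_iff, mem_opn_compl, mem_opn_compl, mem_opn_compl]
  simp only [not_or, forall_and]

theorem IsPi.measurableSet {N : Set (ℕ → Bool)} (hN : IsPi N) : MeasurableSet N := by
  obtain ⟨B, hB, rfl⟩ := hN
  exact (measurableSet_opn _).compl

theorem IsPi.isClosed {N : Set (ℕ → Bool)} (hN : IsPi N) : IsClosed N := by
  obtain ⟨B, hB, rfl⟩ := hN
  exact (isOpen_opn _).isClosed_compl

theorem isPi_univ : IsPi Set.univ := by
  refine ⟨fun _ => False, Sig.of_primrec (PrimrecPred.of_eq (PrimrecRel.comp Primrec.eq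
    (Primrec.const 0) (Primrec.const 1)) (p := fun _ => (0 : ℕ) = 1) (by simp)), ?_⟩
  ext X
  rw [mem_opn_compl]
  simp

theorem isPi_cyl (σ : BinStr) : IsPi (cyl σ) := by
  refine ⟨fun τ => τ.length = σ.length ∧ ¬ τ = σ, Sig.of_primrec (PrimrecPred.and
    (PrimrecRel.comp Primrec.eq Primrec.list_length (Primrec.const _))
    (PrimrecPred.not (PrimrecRel.comp Primrec.eq Primrec.id (Primrec.const _)))), ?_⟩
  ext X
  rw [mem_opn_compl]
  change IsInitSeg σ X ↔ _
  rw [isInitSeg_iff]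
  simp only [pre_length, not_and, not_not]
  constructor
  · rintro h n rfl
    exact h.symm
  · intro h
    exact (h _ rfl).symm

theorem generic {ι : Type*} [Countable ι] [Nonempty ι] (D : ι → Set (ℕ → Bool) → Prop)
    (hD : ∀ i P, Cond P → ∃ Q ⊆ P, Cond Q ∧ D i Q) : ∃ X, ∀ i, ∃ Q, D i Q ∧ X ∈ Q := by
  obtain ⟨en, hen⟩ := exists_surjective_nat ι
  choose! q hq1 hq2 hq3 using hD
  let P : ℕ → Set (ℕ → Bool) := fun n => Nat.rec Set.univ (fun n P => q (en n) P) n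
  have hPs : ∀ n, P (n + 1) = q (en n) (P n) := fun n => rfl
  have hP : ∀ n, Cond (P n) := by
    intro n
    induction n with
    | zero => exact ⟨isPi_univ, by change fairCoin Set.univ ≠ 0; simp⟩
    | succ n ih => rw [hPs]; exact hq2 _ _ ih
  have hne : ∀ n, (P n).Nonempty := fun n => nonempty_of_measure_ne_zero (hP n).2
  obtain ⟨X, hX⟩ := IsCompact.nonempty_iInter_of_sequence_nonempty_isCompact_isClosed P
    (fun n => by rw [hPs]; exact hq1 _ _ (hP n)) hne (hP 0).1.isClosed.isCompact
    (fun n => (hP n).1.isClosed)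
  refine ⟨X, fun i => ?_⟩
  obtain ⟨n, rfl⟩ := hen i
  refine ⟨P (n + 1), ?_, Set.mem_iInter.1 hX (n + 1)⟩
  rw [hPs]
  exact hq3 _ _ (hP n)

theorem countable_partrec (α β : Type*) [Primcodable α] [Primcodable β] :
    Countable {f : α →. β // Partrec f} := by
  have h : ∀ f : {f : α →. β // Partrec f}, ∃ c : Nat.Partrec.Code, c.eval = fun n =>
      Part.bind (Encodable.decode (α := α) n) fun a => (f.1 a).map Encodable.encode :=
    fun f => Nat.Partrec.Code.exists_code.1 f.2
  choose c hc using h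
  refine Function.Injective.countable (f := c) fun f g hfg => Subtype.ext (funext fun a => ?_)
  have h1 := congrFun ((hc f).symm.trans ((congrArg _ hfg).trans (hc g))) (Encodable.encode a)
  simp only [Encodable.encodek, Part.coe_some, Part.bind_some] at h1
  refine Part.ext fun b => ?_
  have h2 : ∀ F : α →. β, b ∈ F a ↔ Encodable.encode b ∈ (F a).map Encodable.encode := by
    intro F
    simp [Part.mem_map_iff]
  rw [h2 f.1, h2 g.1, h1]

theorem countable_isPi : Countable {N : Set (ℕ → Bool) // IsPi N} := by
  classical
  have h : ∀ N : {N : Set (ℕ → Bool) // IsPi N}, ∃ f : {f : BinStr × ℕ →. Bool // Partrec f},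
      N.1 = (opn {σ | ∃ s, true ∈ f.1 (σ, s)})ᶜ := by
    rintro ⟨N, B, ⟨S, hS, hB⟩, rfl⟩
    refine ⟨⟨fun q => Part.some (decide (S q.1 q.2)), (PrimrecRel.decide hS).to_comp⟩, ?_⟩
    simp [hB]
  choose f hf using h
  have := countable_partrec (BinStr × ℕ) Bool
  refine Function.Injective.countable (f := f) fun N M h => Subtype.ext ?_
  rw [hf N, hf M, h]

theorem countable_ce : Countable {W : Set (ℕ × BinStr) // CEStrSet W} := by
  have h : ∀ W : {W : Set (ℕ × BinStr) // CEStrSet W},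
      ∃ f : {f : ℕ × BinStr →. Unit // Partrec f}, ∀ p, p ∈ W.1 ↔ (f.1 p).Dom := by
    rintro ⟨W, f, hf, h⟩
    exact ⟨⟨f, hf⟩, h⟩
  choose f hf using h
  have := countable_partrec (ℕ × BinStr) Unit
  refine Function.Injective.countable (f := f) fun N M h => Subtype.ext (Set.ext fun p => ?_)
  rw [hf N, hf M, h]

def Good (X : ℕ → Bool) : Prop := ∀ N, IsPi N → fairCoin N = 0 → X ∉ N

def Computes (Ψ : BinStr × ℕ →. Bool) (X : ℕ → Bool) (C : Set ℕ) : Prop :=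
  (∀ x, ∃ σ, IsInitSeg σ X ∧ (Ψ (σ, x)).Dom) ∧
    (∀ σ x b, IsInitSeg σ X → b ∈ Ψ (σ, x) → (b = true ↔ x ∈ C))

theorem dense_ML (W : Set (ℕ × BinStr)) (hW : CEStrSet W)
    (hm : ∀ n : ℕ, fairCoin (⋃ σ ∈ {σ | (n, σ) ∈ W}, cyl σ) ≤ 1 / 2 ^ n)
    (P : Set (ℕ → Bool)) (hP : Cond P) :
    ∃ Q ⊆ P, Cond Q ∧ ∃ n : ℕ, ∀ X ∈ Q, X ∉ ⋃ σ ∈ {σ | (n, σ) ∈ W}, cyl σ := by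
  obtain ⟨f, hf, hfW⟩ := hW
  obtain ⟨n, hn⟩ := ENNReal.exists_inv_two_pow_lt hP.2
  have hpi : IsPi (opn {σ | (n, σ) ∈ W})ᶜ :=
    ⟨fun σ => (n, σ) ∈ W, ((Sig.dom hf).comp_primrec (Primrec.pair (Primrec.const n)
      Primrec.id)).of_eq fun σ => (hfW _).symm, rfl⟩
  refine ⟨P ∩ (opn {σ | (n, σ) ∈ W})ᶜ, Set.inter_subset_left, ⟨hP.1.inter hpi, fun h0 => ?_⟩,
    n, fun X hX => hX.2⟩
  have h1 : fairCoin P ≤ fairCoin (P ∩ (opn {σ | (n, σ) ∈ W})ᶜ) + fairCoin (opn {σ | (n, σ) ∈ W}) := by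
    refine (measure_mono fun X hX => ?_).trans (measure_union_le _ _)
    by_cases h : X ∈ opn {σ | (n, σ) ∈ W}
    · exact Or.inr h
    · exact Or.inl ⟨hX, h⟩
  rw [h0, zero_add] at h1
  have h2 := h1.trans (hm n)
  rw [one_div, ENNReal.inv_pow] at h2
  exact absurd hn (not_lt.2 h2)

theorem dense_null (N : Set (ℕ → Bool)) (hN : IsPi N) (h0 : fairCoin N = 0)
    (P : Set (ℕ → Bool)) (hP : Cond P) :
    ∃ Q ⊆ P, Cond Q ∧ ∀ X ∈ Q, X ∉ N := by
  obtain ⟨B, hB, rfl⟩ := hN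
  by_contra H
  push Not at H
  have h1 : ∀ σ ∈ {σ | B σ}, fairCoin (P ∩ cyl σ) = 0 := by
    intro σ hσ
    by_contra h
    obtain ⟨X, hX, hXB⟩ := H _ Set.inter_subset_left ⟨hP.1.inter (isPi_cyl σ), h⟩
    exact hXB (Set.mem_biUnion hσ hX.2)
  have h2 : fairCoin (⋃ σ ∈ {σ | B σ}, (P ∩ cyl σ)) = 0 :=
    (measure_biUnion_null_iff (Set.to_countable _)).2 h1
  refine hP.2 (measure_mono_null (fun X hX => ?_) (measure_union_null h0 h2))
  by_cases h : X ∈ opn {σ | B σ}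
  · right
    simp only [opn, Set.mem_iUnion] at h
    obtain ⟨σ, hσ, h⟩ := h
    exact Set.mem_biUnion hσ ⟨hX, h⟩
  · exact Or.inl h

theorem dense_coh (R : ℕ → Set ℕ) (hR : ComputableSeq R)
    (hno : ¬ ∃ C : Set ℕ, ComputableSet C ∧ Cohesive R C)
    (Ψ : BinStr × ℕ →. Bool) (hΨ : Partrec Ψ) (P : Set (ℕ → Bool)) (hP : Cond P) :
    ∃ Q ⊆ P, Cond Q ∧ ∀ X ∈ Q, Good X → ∀ C, Computes Ψ X C → ¬ Cohesive R C := by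
  by_contra H
  have key : ∀ Q ⊆ P, Cond Q → ∃ X ∈ Q, Good X ∧ ∃ C, Computes Ψ X C ∧ Cohesive R C := by
    intro Q hQP hQ
    by_contra h
    refine H ⟨Q, hQP, hQ, fun X hX hg C hc hcoh => h ⟨X, hX, hg, C, hc, hcoh⟩⟩
  obtain ⟨f, hf, hRf⟩ := hR
  obtain ⟨⟨B0, hB0, hPB⟩, hPpos⟩ := hP
  let dec : ℕ → Bool × ℕ × ℕ := fun n =>
    (Encodable.decode (α := Bool × ℕ × ℕ) n).getD (true, 0, 0)
  have hdec : Primrec dec := Primrec.option_getD.comp Primrec.decode (Primrec.const _)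
  have hdece : ∀ d, dec (Encodable.encode d) = d := fun d => by
    change (Encodable.decode (α := Bool × ℕ × ℕ) (Encodable.encode d)).getD (true, 0, 0) = d
    rw [Encodable.encodek]; rfl
  let Bad : List ℕ → BinStr → Prop := fun p σ => B0 σ ∨ ∃ z : ℕ × ℕ × ℕ,
    (p[z.1]? = some z.2.2 ∧ (dec z.2.2).2.1 ≤ z.2.1) ∧
      (true ∈ Ψ (σ, z.2.1) ∧ (!(dec z.2.2).1) = f z.1 z.2.1)
  have hBad : Sig fun q : List ℕ × BinStr => Bad q.1 q.2 := by
    refine Sig.or (hB0.comp_primrec Primrec.snd) ?_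
    refine Sig.ex (B := fun (q : List ℕ × BinStr) (z : ℕ × ℕ × ℕ) =>
      (q.1[z.1]? = some z.2.2 ∧ (dec z.2.2).2.1 ≤ z.2.1) ∧
      (true ∈ Ψ (q.2, z.2.1) ∧ (!(dec z.2.2).1) = f z.1 z.2.1)) ?_
    have p1 : Primrec fun y : (List ℕ × BinStr) × (ℕ × ℕ × ℕ) => y.2.1 :=
      Primrec.fst.comp Primrec.snd
    have p2 : Primrec fun y : (List ℕ × BinStr) × (ℕ × ℕ × ℕ) => y.2.2.1 :=
      Primrec.fst.comp (Primrec.snd.comp Primrec.snd)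
    have p3 : Primrec fun y : (List ℕ × BinStr) × (ℕ × ℕ × ℕ) => y.2.2.2 :=
      Primrec.snd.comp (Primrec.snd.comp Primrec.snd)
    refine Sig.and (Sig.of_primrec (PrimrecPred.and ?_ ?_)) (Sig.and ?_ ?_)
    · exact PrimrecRel.comp Primrec.eq
        (Primrec.list_getElem?.comp (Primrec.fst.comp Primrec.fst) p1) (Primrec.option_some.comp p3)
    · exact PrimrecRel.comp Primrec.nat_le
        (Primrec.fst.comp (Primrec.snd.comp (hdec.comp p3))) p2
    · exact (Sig.graph hΨ).comp_primrec
        (g := fun y : (List ℕ × BinStr) × (ℕ × ℕ × ℕ) => ((y.1.2, y.2.2.1), true))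
        (Primrec.pair (Primrec.pair (Primrec.snd.comp Primrec.fst) p2) (Primrec.const true))
    · have hEq : Sig fun q : Bool × Bool => q.1 = q.2 :=
        Sig.of_primrec (PrimrecRel.comp Primrec.eq Primrec.fst Primrec.snd)
      exact hEq.comp (g := fun y : (List ℕ × BinStr) × (ℕ × ℕ × ℕ) =>
          ((!(dec y.2.2.2).1), f y.2.1 y.2.2.1))
        (Computable.pair (Primrec.not.comp (Primrec.fst.comp (hdec.comp p3))).to_comp
          (hf.comp p1.to_comp p2.to_comp))
  let Q : List ℕ → Set (ℕ → Bool) := fun p => (opn {σ | Bad p σ})ᶜ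
  have hQpi : ∀ p, IsPi (Q p) := fun p =>
    ⟨Bad p, hBad.comp_primrec (Primrec.pair (Primrec.const p) Primrec.id), rfl⟩
  have hQmem : ∀ p X, X ∈ Q p ↔ X ∈ P ∧ ∀ j u, p[j]? = some u → ∀ x, (dec u).2.1 ≤ x →
      ∀ n, true ∈ Ψ (pre X n, x) → f j x = (dec u).1 := by
    intro p X
    rw [hPB]
    change X ∈ (opn {σ | Bad p σ})ᶜ ↔ _
    rw [mem_opn_compl, mem_opn_compl]
    constructor
    · intro h
      refine ⟨fun n hn => h n (Or.inl hn), fun j u hju x hx n hn => ?_⟩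
      by_contra hne
      refine h n (Or.inr ⟨(j, x, u), ⟨hju, hx⟩, hn, ?_⟩)
      change (!(dec u).1) = f j x
      cases h1 : (dec u).1 <;> cases h2 : f j x <;> simp_all
    · rintro ⟨h1, h2⟩ n (hn | ⟨⟨j, x, u⟩, ⟨hju, hx⟩, hn, he⟩)
      · exact h1 n hn
      · have := h2 j u hju x hx n hn
        change (!(dec u).1) = f j x at he
        rw [this] at he
        simp at he
  have hQP : ∀ p, Q p ⊆ P := fun p X hX => ((hQmem p X).1 hX).1
  have hQs : ∀ p m X, X ∈ Q (p ++ [m]) ↔ X ∈ Q p ∧ ∀ x, (dec m).2.1 ≤ x →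
      ∀ n, true ∈ Ψ (pre X n, x) → f p.length x = (dec m).1 := by
    intro p m X
    rw [hQmem, hQmem]
    constructor
    · rintro ⟨h1, h2⟩
      refine ⟨⟨h1, fun j u hju => h2 j u ?_⟩, h2 p.length m (by simp)⟩
      have hj : j < p.length := (List.getElem?_eq_some_iff.1 hju).1
      rw [List.getElem?_append_left hj, hju]
    · rintro ⟨⟨h1, h2⟩, h3⟩
      refine ⟨h1, fun j u hju => ?_⟩
      rcases lt_trichotomy j p.length with hj | hj | hj
      · rw [List.getElem?_append_left hj] at hju
        exact h2 j u hju
      · subst hj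
        have : m = u := by simpa using hju
        subst this
        exact h3
      · have := (List.getElem?_eq_some_iff.1 hju).1
        simp at this
        omega
  let V : List ℕ → Prop := fun p => fairCoin (Q p) ≠ 0
  let A : List ℕ → ℕ → Prop := fun p m => ¬ fairCoin.real (Q (p ++ [m])) < 1 / (((dec m).2.2 : ℝ) + 1)
  have hA : Sig fun q : List ℕ × ℕ => ¬ A q.1 q.2 := by
    refine ((sig_measure hBad).comp_primrec (g := fun q : List ℕ × ℕ =>
      (q.1 ++ [q.2], (dec q.2).2.2)) (Primrec.pair (Primrec.list_concat.comp Primrec.fst Primrec.snd)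
        (Primrec.snd.comp (Primrec.snd.comp (hdec.comp Primrec.snd))))).of_eq fun q => ?_
    exact not_not.symm
  have hV0 : V [] := by
    have : Q [] = P := by
      ext X
      rw [hQmem]
      simp
    change fairCoin (Q []) ≠ 0
    rwa [this]
  have hV1 : ∀ p, V p → ∃ m, A p m := by
    intro p hp
    obtain ⟨X, hX, hg, C, hC, hinf, hcoh⟩ := key (Q p) (hQP p) ⟨hQpi p, hp⟩
    have hs : ∃ s n, ∀ x ∈ C, n ≤ x → f p.length x = s := by
      rcases hcoh p.length with h | h
      · obtain ⟨b, hb⟩ := h.bddAbove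
        refine ⟨true, b + 1, fun x hx hbx => ?_⟩
        rw [← hRf]
        by_contra hne
        have := hb ⟨hx, hne⟩
        omega
      · obtain ⟨b, hb⟩ := h.bddAbove
        refine ⟨false, b + 1, fun x hx hbx => ?_⟩
        rw [← Bool.not_eq_true, ← hRf]
        intro hne
        have := hb ⟨hx, fun h => h hne⟩
        omega
    obtain ⟨s, n, hs⟩ := hs
    have heq : ∀ k : ℕ, Q (p ++ [Encodable.encode (s, n, k)]) = Q (p ++ [Encodable.encode (s, n, (0 : ℕ))]) := by
      intro k
      ext Y
      rw [hQs, hQs, hdece, hdece]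
    have hXm : X ∈ Q (p ++ [Encodable.encode (s, n, (0 : ℕ))]) := by
      rw [hQs, hdece]
      exact ⟨hX, fun x hx l hl => hs x ((hC.2 _ x true (isInitSeg_pre X l) hl).1 rfl) hx⟩
    have hpos : fairCoin (Q (p ++ [Encodable.encode (s, n, (0 : ℕ))])) ≠ 0 := fun h0 =>
      hg _ (hQpi _) h0 hXm
    have hpos' : 0 < fairCoin.real (Q (p ++ [Encodable.encode (s, n, (0 : ℕ))])) :=
      ENNReal.toReal_pos hpos (measure_ne_top _ _)
    obtain ⟨k, hk⟩ := exists_nat_one_div_lt hpos'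
    refine ⟨Encodable.encode (s, n, k), ?_⟩
    change ¬ _ < _
    rw [heq, hdece]
    exact not_lt.2 hk.le
  have hV2 : ∀ p m, A p m → V (p ++ [m]) := by
    intro p m h h0
    apply h
    rw [Measure.real, h0]
    simp only [ENNReal.toReal_zero]
    positivity
  obtain ⟨e, he, m, hm, hlim⟩ := limit_path hA hV0 hV1 hV2
  refine hno (computable_cohesive hf hRf (e := fun t i => (dec (e t i)).1)
    (Primrec.fst.comp (hdec.comp he)) (m := fun i => (dec (m i)).1) (fun i => ?_) fun n => ?_)
  · filter_upwards [hlim i] with t ht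
    rw [ht]
  · obtain ⟨X, hX, hg, C, hC, hinf, hcoh⟩ := key (Q _) (hQP _) ⟨hQpi _, hm n⟩
    let b := ∑ j ∈ Finset.range n, (dec (m j)).2.1
    refine (hinf.sdiff (Set.finite_Iio b)).mono ?_
    rintro x ⟨hxC, hxb⟩ j hj
    obtain ⟨σ, hσ, hd⟩ := hC.1 x
    obtain ⟨v, hv⟩ := Part.dom_iff_mem.1 hd
    have hvt : v = true := (hC.2 σ x v hσ hv).2 hxC
    subst hvt
    rw [(isInitSeg_iff _ _).1 hσ] at hv
    refine ((hQmem _ X).1 hX).2 j (m j) ?_ x ?_ _ hv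
    · simp [hj]
    · have h1 : (dec (m j)).2.1 ≤ b :=
        Finset.single_le_sum (f := fun j => (dec (m j)).2.1) (fun _ _ => Nat.zero_le _)
          (Finset.mem_range.2 hj)
      have h2 : b ≤ x := not_lt.1 hxb
      exact h1.trans h2

/-- **Theorem (Wang, Theorem 3.1 restated via reductions).** If `R` is a computable
sequence admitting no computable `R`-cohesive set, then there exists a Martin-Löf
random `X` computing no `R`-cohesive set. -/
theorem exists_MLRandom_computing_no_cohesive
    (R : ℕ → Set ℕ) (hR : ComputableSeq R)
    (hno : ¬ ∃ C : Set ℕ, ComputableSet C ∧ Cohesive R C) :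
    ∃ X : ℕ → Bool, MLRandom X ∧
      ∀ C : Set ℕ, ReducibleToFun C X → ¬ Cohesive R C := by
  have c1 := countable_ce
  have c2 := countable_isPi
  have c3 := countable_partrec (BinStr × ℕ) Bool
  let D : ({W : Set (ℕ × BinStr) // CEStrSet W} ⊕ {N : Set (ℕ → Bool) // IsPi N} ⊕
      {f : BinStr × ℕ →. Bool // Partrec f}) → Set (ℕ → Bool) → Prop := fun i Q =>
    match i with
    | Sum.inl W => (∀ n : ℕ, fairCoin (⋃ σ ∈ {σ | (n, σ) ∈ W.1}, cyl σ) ≤ 1 / 2 ^ n) →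
        ∃ n : ℕ, ∀ X ∈ Q, X ∉ ⋃ σ ∈ {σ | (n, σ) ∈ W.1}, cyl σ
    | Sum.inr (Sum.inl N) => fairCoin N.1 = 0 → ∀ X ∈ Q, X ∉ N.1
    | Sum.inr (Sum.inr Ψ) => ∀ X ∈ Q, Good X → ∀ C, Computes Ψ.1 X C → ¬ Cohesive R C
  have : Nonempty {N : Set (ℕ → Bool) // IsPi N} := ⟨⟨_, isPi_univ⟩⟩
  obtain ⟨X, hX⟩ := generic D (by
    rintro (W | N | Ψ) P hP
    · by_cases h : ∀ n : ℕ, fairCoin (⋃ σ ∈ {σ | (n, σ) ∈ W.1}, cyl σ) ≤ 1 / 2 ^ n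
      · obtain ⟨Q, h1, h2, h3⟩ := dense_ML W.1 W.2 h P hP
        exact ⟨Q, h1, h2, fun _ => h3⟩
      · exact ⟨P, subset_rfl, hP, fun h' => absurd h' h⟩
    · by_cases h : fairCoin N.1 = 0
      · obtain ⟨Q, h1, h2, h3⟩ := dense_null N.1 N.2 h P hP
        exact ⟨Q, h1, h2, fun _ => h3⟩
      · exact ⟨P, subset_rfl, hP, fun h' => absurd h' h⟩
    · exact dense_coh R hR hno Ψ.1 Ψ.2 P hP)
  have hgood : Good X := by
    intro N hN h0
    obtain ⟨Q, hQ, hXQ⟩ := hX (Sum.inr (Sum.inl ⟨N, hN⟩))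
    exact hQ h0 X hXQ
  refine ⟨X, fun W hW hm hmem => ?_, fun C hC => ?_⟩
  · obtain ⟨Q, hQ, hXQ⟩ := hX (Sum.inl ⟨W, hW⟩)
    obtain ⟨n, hn⟩ := hQ hm
    exact hn X hXQ (Set.mem_iInter.1 hmem n)
  · obtain ⟨Ψ, hΨ, -, h1, h2⟩ := hC
    obtain ⟨Q, hQ, hXQ⟩ := hX (Sum.inr (Sum.inr ⟨Ψ, hΨ⟩))
    exact hQ X hXQ hgood C ⟨h1, h2⟩
end
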